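/- arXiv:2408.14046 — 2 statements merged into one kernel-verified Lean document; each statement's English description precedes it below -/
import Mathlib

section
/- Let q be a prime power, let d be a positive integer coprime to q, let n_0 ≤ n be positive integers, let g ∈ GL(n_0, F_q), and let χ be an irreducible complex character of GL(n, F_q). If for each prime divisor ℓ of d one has v_ℓ(χ(1)) − v_ℓ(∏_{i=0}^{n_0−1} (q^{n−i} − 1)) ≥ v_ℓ(d), then d divides χ(g). -/
open Matrix

noncomputable def blockOneHom (F : Type*) [Field F] (n₀ n : ℕ) (h : n₀ ≤ n) :
    Matrix (Fin n₀) (Fin n₀) F →* Matrix (Fin n) (Fin n) F :=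
  (Matrix.reindexAlgEquiv F F
      ((finSumFinEquiv (m := n₀) (n := n - n₀)).trans
        (finCongr (Nat.add_sub_cancel' h)))).toAlgHom.toMonoidHom.comp
    { toFun := fun A => Matrix.fromBlocks A 0 0 (1 : Matrix (Fin (n - n₀)) (Fin (n - n₀)) F)
      map_one' := by simp [Matrix.fromBlocks_one]
      map_mul' := fun A B => by
        simp [Matrix.fromBlocks_multiply] }

noncomputable def glEmbed {F : Type*} [Field F] {n₀ n : ℕ} (h : n₀ ≤ n) :
    GL (Fin n₀) F →* GL (Fin n) F :=
  Units.map (blockOneHom F n₀ n h)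

def IsIrrChar (G : Type) [Group G] (f : G → ℂ) : Prop :=
  ∃ V : FDRep ℂ G, CategoryTheory.Simple V ∧ FDRep.character V = f

/-- `d` divides the algebraic number `z`, i.e. `z / d` is an algebraic integer. -/
def NatDvdAlg (d : ℕ) (z : ℂ) : Prop := IsIntegral ℤ (z / (d : ℂ))

open CategoryTheory in
lemma schur_aux {G : Type} [Group G] (V : FDRep ℂ G) [Simple V] (f : V →ₗ[ℂ] V)
    (hf : ∀ g, f ∘ₗ V.ρ g = V.ρ g ∘ₗ f) : ∃ c : ℂ, f = c • LinearMap.id := by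
  let φ : V ⟶ V := ⟨FGModuleCat.ofHom f, fun g => by
    apply InducedCategory.hom_ext
    apply ModuleCat.hom_ext
    exact hf g⟩
  obtain ⟨c, hc⟩ := endomorphism_simple_eq_smul_id ℂ φ
  refine ⟨c, ?_⟩
  have := congrArg (fun ψ : V ⟶ V => ψ.hom.hom.hom) hc
  exact this.symm

lemma isIntegral_char {G : Type} [Group G] [Finite G] (V : FDRep ℂ G) (g : G) :
    IsIntegral ℤ (V.character g) := by
  unfold FDRep.character
  rw [Module.End.trace_eq_sum_roots_charpoly_of_splits (IsAlgClosed.splits _)]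
  apply IsIntegral.multiset_sum
  intro x hx
  have hx' : Module.End.HasEigenvalue (V.ρ g) x := by
    rw [Module.End.hasEigenvalue_iff_isRoot_charpoly]
    exact Polynomial.isRoot_of_mem_roots hx
  obtain ⟨v, hv⟩ := hx'.exists_hasEigenvector
  have h1 := hv.pow_apply (orderOf g)
  rw [← map_pow, pow_orderOf_eq_one, map_one] at h1
  have h2 : x ^ orderOf g = 1 := by
    have : (x ^ orderOf g - 1) • v = 0 := by
      rw [sub_smul, ← h1]; simp
    rcases smul_eq_zero.1 this with h | h
    · exact sub_eq_zero.1 h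
    · exact absurd h hv.2
  apply IsIntegral.of_pow (orderOf_pos g)
  rw [h2]; exact isIntegral_one

/-- central character integrality -/
lemma isIntegral_central {G : Type} [Group G] [Fintype G] (V : FDRep ℂ G)
    [CategoryTheory.Simple V] (g : G) :
    ∃ c : ℂ, IsIntegral ℤ c ∧
      (Nat.card (ConjClasses.mk g).carrier : ℂ) * V.character g = c * V.character 1 := by
  classical
  set S : Finset G := (ConjClasses.mk g).carrier.toFinset with hS
  have memS : ∀ x, x ∈ S ↔ IsConj g x := by
    intro x
    rw [hS, Set.mem_toFinset, ConjClasses.mem_carrier_iff_mk_eq, ConjClasses.mk_eq_mk_iff_isConj,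
      isConj_comm]
  let f : V →ₗ[ℂ] V := ∑ x ∈ S, V.ρ x
  obtain ⟨c, hc⟩ := schur_aux V f (by
    intro h
    change (∑ x ∈ S, V.ρ x) * V.ρ h = V.ρ h * ∑ x ∈ S, V.ρ x
    rw [Finset.sum_mul, Finset.mul_sum]
    refine Finset.sum_bij' (fun x _ => h⁻¹ * x * h) (fun x _ => h * x * h⁻¹) ?_ ?_ ?_ ?_ ?_
    · intro x hx
      rw [memS] at hx ⊢
      exact hx.trans (isConj_iff.2 ⟨h⁻¹, by simp⟩)
    · intro x hx
      rw [memS] at hx ⊢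
      exact hx.trans (isConj_iff.2 ⟨h, by simp⟩)
    · intro x _; group
    · intro x _; group
    · intro x _
      rw [← map_mul, ← map_mul]; congr 1; group)
  have htr : (Nat.card (ConjClasses.mk g).carrier : ℂ) * V.character g = c * V.character 1 := by
    have h1 : LinearMap.trace ℂ V f = S.card * V.character g := by
      simp only [f, map_sum]
      rw [Finset.sum_congr rfl (g := fun _ => V.character g), Finset.sum_const, nsmul_eq_mul]
      intro x hx
      obtain ⟨y, rfl⟩ := isConj_iff.1 ((memS x).1 hx)
      exact FDRep.char_conj V g y
    have h2 : LinearMap.trace ℂ V f = c * V.character 1 := by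
      rw [hc, map_smul, FDRep.character, map_one]; rfl
    rw [← h2, h1, hS, Set.toFinset_card, Nat.card_eq_fintype_card]
  by_cases hne : Nontrivial V
  · refine ⟨c, ?_, htr⟩
    let Φ : MonoidAlgebra ℤ G →ₐ[ℤ] Module.End ℂ V := MonoidAlgebra.lift ℤ _ G V.ρ
    have hz : IsIntegral ℤ (∑ x ∈ S, MonoidAlgebra.of ℤ G x) := by
      have : Module.Finite ℤ (MonoidAlgebra ℤ G) := inferInstance
      exact IsIntegral.of_finite ℤ _
    have h3 := hz.map Φ
    have h4 : Φ (∑ x ∈ S, MonoidAlgebra.of ℤ G x) = algebraMap ℂ (Module.End ℂ V) c := by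
      rw [map_sum]
      simp only [Φ, MonoidAlgebra.lift_of]
      rw [Algebra.algebraMap_eq_smul_one]
      exact hc
    rw [h4] at h3
    exact (isIntegral_algebraMap_iff (algebraMap ℂ (Module.End ℂ V)).injective).1 h3
  · refine ⟨0, isIntegral_zero, ?_⟩
    rw [not_nontrivial_iff_subsingleton] at hne
    have : ∀ x, V.character x = 0 := fun x => by
      rw [FDRep.character, Subsingleton.elim (V.ρ x) 0, map_zero]
    simp [this]

lemma glEmbed_comm {F : Type} [Field F] {n₀ n : ℕ} (h : n₀ ≤ n) (g : GL (Fin n₀) F) :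
    ∃ ψ : GL (Fin (n - n₀)) F →* GL (Fin n) F, Function.Injective ψ ∧
      ∀ x, ψ x * glEmbed h g = glEmbed h g * ψ x := by
  let e := (finSumFinEquiv (m := n₀) (n := n - n₀)).trans (finCongr (Nat.add_sub_cancel' h))
  let β : Matrix (Fin (n - n₀)) (Fin (n - n₀)) F →* Matrix (Fin n) (Fin n) F :=
    (Matrix.reindexAlgEquiv F F e).toAlgHom.toMonoidHom.comp
    { toFun := fun A => Matrix.fromBlocks (1 : Matrix (Fin n₀) (Fin n₀) F) 0 0 A
      map_one' := by simp [Matrix.fromBlocks_one]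
      map_mul' := fun A B => by simp [Matrix.fromBlocks_multiply] }
  refine ⟨Units.map β, Units.map_injective ?_, ?_⟩
  · intro A B hAB
    have := (Matrix.reindexAlgEquiv F F e).injective hAB
    exact (Matrix.fromBlocks_inj.1 this).2.2.2
  · intro x
    apply Units.ext
    change (Matrix.reindexAlgEquiv F F e) (Matrix.fromBlocks 1 0 0 x.1) *
      (Matrix.reindexAlgEquiv F F e) (Matrix.fromBlocks g.1 0 0 1) =
      (Matrix.reindexAlgEquiv F F e) (Matrix.fromBlocks g.1 0 0 1) *
      (Matrix.reindexAlgEquiv F F e) (Matrix.fromBlocks 1 0 0 x.1)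
    rw [← map_mul, ← map_mul]
    simp [Matrix.fromBlocks_multiply]

lemma card_GL_aux (F : Type) [Field F] [Fintype F] (n : ℕ) :
    Nat.card (GL (Fin n) F) = Fintype.card F ^ (∑ i ∈ Finset.range n, i) *
      ∏ i ∈ Finset.range n, (Fintype.card F ^ (n - i) - 1) := by
  rw [Matrix.card_GL_field, Fin.prod_univ_eq_prod_range
    (fun i => Fintype.card F ^ n - Fintype.card F ^ i), ← Finset.prod_pow_eq_pow_sum,
    ← Finset.prod_mul_distrib]
  refine Finset.prod_congr rfl fun i hi => ?_
  rw [Nat.mul_sub, mul_one, ← pow_add]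
  congr 3
  have := Finset.mem_range.1 hi
  omega

lemma card_class_dvd {F : Type} [Field F] [Fintype F] {n₀ n : ℕ} (h : n₀ ≤ n)
    (g : GL (Fin n₀) F) :
    ∃ N, Nat.card (ConjClasses.mk (glEmbed h g)).carrier ∣
      Fintype.card F ^ N * ∏ i ∈ Finset.range n₀, (Fintype.card F ^ (n - i) - 1) := by
  classical
  obtain ⟨ψ, hψ, hc⟩ := glEmbed_comm h g
  set γ := glEmbed h g
  have h1 : Nat.card (ConjClasses.mk γ).carrier *
      Nat.card (MulAction.stabilizer (ConjAct (GL (Fin n) F)) γ) = Nat.card (GL (Fin n) F) := by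
    rw [Nat.card_eq_fintype_card, ConjClasses.card_carrier, Nat.card_eq_fintype_card,
      Nat.card_eq_fintype_card]
    apply Nat.div_mul_cancel
    simpa [Nat.card_eq_fintype_card] using
      Subgroup.card_subgroup_dvd_card (MulAction.stabilizer (ConjAct (GL (Fin n) F)) γ)
  have h2 : Nat.card (GL (Fin (n - n₀)) F) ∣
      Nat.card (MulAction.stabilizer (ConjAct (GL (Fin n) F)) γ) := by
    let ψ' : GL (Fin (n - n₀)) F →* MulAction.stabilizer (ConjAct (GL (Fin n) F)) γ :=
      (ConjAct.toConjAct.toMonoidHom.comp ψ).codRestrict _ (fun x => by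
        rw [MulAction.mem_stabilizer_iff]
        change ConjAct.toConjAct (ψ x) • γ = γ
        rw [ConjAct.toConjAct_smul, hc x, mul_inv_cancel_right])
    apply Subgroup.card_dvd_of_injective ψ'
    intro a b hab
    exact hψ (congrArg (fun z => ConjAct.ofConjAct z.1) hab)
  obtain ⟨a, ha⟩ := h2
  have hq : 1 < Fintype.card F := Fintype.one_lt_card
  rw [ha, card_GL_aux, card_GL_aux] at h1
  have hP : ∏ i ∈ Finset.range n, (Fintype.card F ^ (n - i) - 1) =
      (∏ i ∈ Finset.range n₀, (Fintype.card F ^ (n - i) - 1)) *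
      ∏ i ∈ Finset.range (n - n₀), (Fintype.card F ^ (n - n₀ - i) - 1) := by
    conv_lhs => rw [← Nat.add_sub_cancel' h, Finset.prod_range_add]
    rw [Nat.add_sub_cancel' h]
    simp only [Nat.sub_sub]
  have hX : 0 < ∏ i ∈ Finset.range (n - n₀), (Fintype.card F ^ (n - n₀ - i) - 1) := by
    apply Finset.prod_pos
    intro i hi
    have := Finset.mem_range.1 hi
    have := Nat.one_lt_pow (n := n - n₀ - i) (by omega) hq
    omega
  rw [hP] at h1
  refine ⟨∑ i ∈ Finset.range n, i,
    Fintype.card F ^ (∑ i ∈ Finset.range (n - n₀), i) * a, ?_⟩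
  apply Nat.eq_of_mul_eq_mul_right hX
  rw [mul_assoc, ← h1]; ring

theorem valuative_criterion_for_divisibility
    (q : ℕ) (hq : IsPrimePow q)
    (F : Type) [Field F] [Fintype F] (hFq : Fintype.card F = q)
    (d : ℕ) (hd : 0 < d) (hdq : Nat.Coprime d q)
    (n₀ n : ℕ) (hn₀ : 0 < n₀) (h : n₀ ≤ n) (g : GL (Fin n₀) F)
    (χ : GL (Fin n) F → ℂ) (hχ : IsIrrChar _ χ)
    (hval : ∀ ℓ : ℕ, ℓ.Prime → ℓ ∣ d → ∀ m : ℕ, χ 1 = (m : ℂ) →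
      (padicValNat ℓ d : ℤ) ≤
        (padicValNat ℓ m : ℤ) -
          (padicValNat ℓ (∏ i ∈ Finset.range n₀, (q ^ (n - i) - 1)) : ℤ)) :
    NatDvdAlg d (χ (glEmbed h g)) := by
  classical
  obtain ⟨V, hV, rfl⟩ := hχ
  have hint := isIntegral_char V (glEmbed h g)
  obtain ⟨c, hc, hcen⟩ := isIntegral_central V (glEmbed h g)
  obtain ⟨N, k, hk⟩ := card_class_dvd h g
  rw [hFq] at hk
  set z := V.character (glEmbed h g)
  set C := Nat.card (ConjClasses.mk (glEmbed h g)).carrier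
  set P := ∏ i ∈ Finset.range n₀, (q ^ (n - i) - 1) with hPdef
  have hq1 : 1 < q := hq.one_lt
  have hP : P ≠ 0 := by
    apply Finset.prod_ne_zero_iff.2
    intro i hi
    have := Finset.mem_range.1 hi
    have := Nat.one_lt_pow (n := n - i) (by omega) hq1
    omega
  set m := Module.finrank ℂ V
  have hm1 : V.character 1 = (m : ℂ) := FDRep.char_one V
  have hd0 : (d : ℂ) ≠ 0 := by exact_mod_cast hd.ne'
  -- `q^N * P * z = k * c * m`
  have key : (q : ℂ) ^ N * P * z = k * c * m := by
    have : (q : ℂ) ^ N * P = C * k := by exact_mod_cast hk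
    rw [this, mul_right_comm, hcen, hm1]; ring
  -- split `P`
  obtain ⟨P', hcop, t, ht⟩ : ∃ P' : ℕ, Nat.Coprime P' d ∧ P * d ∣ P' * m := by
    have hPd : P * d ≠ 0 := mul_ne_zero hP hd.ne'
    refine ⟨∏ p ∈ P.primeFactors \ d.primeFactors, p ^ P.factorization p, ?_, ?_⟩
    · apply Nat.Coprime.prod_left
      intro p hp
      rw [Finset.mem_sdiff] at hp
      have hpp := Nat.prime_of_mem_primeFactors hp.1
      apply Nat.Coprime.pow_left
      rw [hpp.coprime_iff_not_dvd]
      intro hpd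
      exact hp.2 (Nat.mem_primeFactors.2 ⟨hpp, hpd, hd.ne'⟩)
    · rw [Nat.dvd_iff_prime_pow_dvd_dvd]
      intro p e hp hpe
      by_cases hpd : p ∣ d
      · have hv := hval p hp hpd m hm1
        apply Dvd.dvd.mul_left
        haveI := Fact.mk hp
        refine (pow_dvd_pow p (?_ : e ≤ padicValNat p m)).trans pow_padicValNat_dvd
        have := (padicValNat_dvd_iff_le hPd).1 hpe
        rw [padicValNat.mul hP hd.ne'] at this
        omega
      · apply Dvd.dvd.mul_right
        have hpP : p ^ e ∣ P :=
          (Nat.Coprime.pow_left e ((hp.coprime_iff_not_dvd).2 hpd)).dvd_of_dvd_mul_right hpe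
        rcases Nat.eq_zero_or_pos e with rfl | he
        · simp
        have hmem : p ∈ P.primeFactors \ d.primeFactors := by
          rw [Finset.mem_sdiff, Nat.mem_primeFactors, Nat.mem_primeFactors]
          exact ⟨⟨hp, (dvd_pow_self p he.ne').trans hpP, hP⟩, fun hh => hpd hh.2.1⟩
        refine (pow_dvd_pow p ((hp.pow_dvd_iff_le_factorization hP).1 hpP)).trans ?_
        exact Finset.dvd_prod_of_mem (fun p => p ^ P.factorization p) hmem
  have hP0 : (P : ℂ) ≠ 0 := by exact_mod_cast hP
  have ht' : (P' : ℂ) * m = P * d * t := by exact_mod_cast ht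
  have key2 : ((q ^ N * P' : ℕ) : ℂ) * (z / d) = k * c * t := by
    push_cast
    rw [mul_div_assoc', div_eq_iff hd0]
    apply mul_left_cancel₀ hP0
    linear_combination (P' : ℂ) * key + k * c * ht'
  have hcop2 : IsCoprime ((q ^ N * P' : ℕ) : ℤ) (d : ℤ) := by
    rw [Nat.isCoprime_iff_coprime]
    exact Nat.Coprime.mul_left (Nat.Coprime.pow_left _ hdq.symm) hcop
  obtain ⟨a, b, hab⟩ := hcop2
  have habC : (a : ℂ) * ((q ^ N * P' : ℕ) : ℂ) + b * d = 1 := by exact_mod_cast hab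
  have hfin : z / d = a * (k * c * t) + b * z := by
    rw [← key2]
    have : z = d * (z / d) := by field_simp
    calc z / d = (a * ((q ^ N * P' : ℕ) : ℂ) + b * d) * (z / d) := by rw [habC, one_mul]
      _ = a * (((q ^ N * P' : ℕ) : ℂ) * (z / d)) + b * (d * (z / d)) := by ring
      _ = _ := by rw [← this]
  unfold NatDvdAlg
  change IsIntegral ℤ (z / d)
  rw [hfin]
  have hI : ∀ r : ℤ, IsIntegral ℤ (r : ℂ) := fun r => isIntegral_algebraMap (R := ℤ) (A := ℂ)
  have hNn : ∀ r : ℕ, IsIntegral ℤ (r : ℂ) := fun r => by exact_mod_cast hI r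
  exact ((hI a).mul (((hNn k).mul hc).mul (hNn t))).add ((hI b).mul hint)
end

section
/- Let q be an odd prime power and k a positive integer. For every ε > 0 there exists N = N(ε) such that for all n ≥ N and every finitely supported function F: Φ → ℕ with Σ_{f∈Φ} d(f)F(f) = n, the proportion of μ ∈ 𝔛_n satisfying |μ(f)| = F(f) for all f ∈ Φ and v_2(d_μ) < v_2((n)_k) among all μ ∈ 𝔛_n with |μ(f)| = F(f) for all f ∈ Φ is less than ε. Here (n)_k = n!/(n−k)! denotes the falling factorial. -/
/-- The `i`-th part (0-indexed, parts in weakly decreasing order) of the partition whose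
multiset of parts is `lam`; `0` if `i` is at least the number of parts. -/
def partNth (lam : Multiset ℕ) (i : ℕ) : ℕ :=
  ((lam.sort (· ≤ ·)).reverse.getD i 0)

/-- The `j`-th part (0-indexed) of the conjugate partition: the number of parts `> j`. -/
def conjNth (lam : Multiset ℕ) (j : ℕ) : ℕ :=
  (lam.filter (fun m => j < m)).card

/-- The cells `(i, j)` (0-indexed) of the Young diagram of `lam`. -/
def cellsOf (lam : Multiset ℕ) : Finset (ℕ × ℕ) :=
  (Finset.range (Multiset.card lam) ×ˢ Finset.range lam.sum).filter
    (fun c => c.2 < partNth lam c.1)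

/-- The hook length of the cell `c = (i, j)` of `lam`:
`(λᵢ − j) + (λ'ⱼ − i) − 1`. -/
def hookLen (lam : Multiset ℕ) (c : ℕ × ℕ) : ℕ :=
  (partNth lam c.1 - c.2) + (conjNth lam c.2 - c.1) - 1

/-- The product of all hook lengths of `lam`. -/
def hookProd (lam : Multiset ℕ) : ℕ :=
  ∏ c ∈ cellsOf lam, hookLen lam c

/-- `α(λ) = Σᵢ (i − 1)·λᵢ` (1-indexed), i.e. `Σᵢ i·λᵢ` for the 0-indexed parts. -/
def alphaStat (lam : Multiset ℕ) : ℕ :=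
  ∑ i ∈ Finset.range (Multiset.card lam), i * partNth lam i

/-- `𝔣_λ = n! / ∏_{h ∈ H(λ)} |h|`, the degree of the irreducible character of `S_n`
indexed by `λ`, as a rational number. -/
def fDeg (lam : Multiset ℕ) : ℚ :=
  (Nat.factorial lam.sum : ℚ) / (hookProd lam : ℚ)

/-- `d_λ(x) = x^{α(λ)} · ∏_{i=1}^{n} (x^i − 1) / ∏_{h ∈ H(λ)} (x^{|h|} − 1)`. -/
def dDeg (lam : Multiset ℕ) (x : ℕ) : ℚ :=
  (x : ℚ) ^ alphaStat lam * (∏ i ∈ Finset.Icc 1 lam.sum, ((x : ℚ) ^ i - 1)) /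
    ∏ c ∈ cellsOf lam, ((x : ℚ) ^ hookLen lam c - 1)
/-- `μ` is a member of `𝔛_n`: a finitely supported assignment of a partition (given by its
multiset of positive parts) to each monic irreducible polynomial `f ≠ x` over `F`, such that
`Σ_f |μ(f)|·deg f = n`. -/
def IsXn (F : Type*) [Field F] (n : ℕ) (μ : Polynomial F →₀ Multiset ℕ) : Prop :=
  (∀ f ∈ μ.support, f.Monic ∧ Irreducible f ∧ f ≠ Polynomial.X) ∧
  (∀ f : Polynomial F, ∀ m ∈ μ f, 0 < m) ∧
  (μ.sum fun f lam => lam.sum * f.natDegree) = n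

/-- `a_μ = ∏_{i=1}^{n} (q^i − 1) / ∏_{f ∈ Φ} ∏_{i=1}^{|μ(f)|} (q^{d(f)·i} − 1)`. -/
noncomputable def aMu (q : ℕ) {F : Type*} [Field F] (n : ℕ)
    (μ : Polynomial F →₀ Multiset ℕ) : ℚ :=
  (∏ i ∈ Finset.Icc 1 n, ((q : ℚ) ^ i - 1)) /
    ∏ f ∈ μ.support, ∏ i ∈ Finset.Icc 1 (μ f).sum, ((q : ℚ) ^ (f.natDegree * i) - 1)

/-- `ψ_m(x) = ∏_{i=1}^{m} (x^i − 1)`. -/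
def psiPoly (m : ℕ) (x : ℚ) : ℚ := ∏ i ∈ Finset.Icc 1 m, (x ^ i - 1)

/-- `H(λ, x) = x^{α(λ)} / ∏_{h ∈ H(λ)} (x^{|h|} − 1)`. -/
def hFactor (lam : Multiset ℕ) (x : ℚ) : ℚ :=
  x ^ alphaStat lam / ∏ c ∈ cellsOf lam, (x ^ hookLen lam c - 1)

/-- `d_μ = ψ_n(q) · ∏_{f ∈ Φ} H(μ(f), q^{d(f)})`, the degree of the irreducible character of
`GL(n, q)` indexed by `μ`, as a rational number. -/
noncomputable def dMu (q : ℕ) {F : Type*} [Field F] (n : ℕ)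
    (μ : Polynomial F →₀ Multiset ℕ) : ℚ :=
  psiPoly n (q : ℚ) * ∏ f ∈ μ.support, hFactor (μ f) ((q : ℚ) ^ f.natDegree)


def dl (lam : Multiset ℕ) : List ℕ := (lam.sort (· ≤ ·)).reverse

lemma dl_coe (lam : Multiset ℕ) : ((dl lam : List ℕ) : Multiset ℕ) = lam := by
  unfold dl
  rw [Multiset.coe_reverse, Multiset.sort_eq]

lemma dl_pairwise (lam : Multiset ℕ) : (dl lam).Pairwise (fun a b => b ≤ a) := by
  unfold dl
  rw [List.pairwise_reverse]
  exact Multiset.pairwise_sort lam (· ≤ ·)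

lemma dl_length (lam : Multiset ℕ) : (dl lam).length = Multiset.card lam := by
  rw [← Multiset.coe_card, dl_coe]

lemma partNth_dl (lam : Multiset ℕ) (i : ℕ) : partNth lam i = (dl lam).getD i 0 := rfl

lemma list_galois (l : List ℕ) (h : l.Pairwise (fun a b => b ≤ a)) (j i : ℕ) :
    j < l.getD i 0 ↔ i < (l.filter (fun m => j < m)).length := by
  induction l generalizing i with
  | nil => simp
  | cons a l ih =>
    rw [List.pairwise_cons] at h
    by_cases ha : j < a
    · cases i with
      | zero => simp [ha]
      | succ i => simp [ha, ← ih h.2]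
    · have : l.filter (fun m => j < m) = [] := by
        rw [List.filter_eq_nil_iff]
        intro b hb
        have := h.1 b hb
        simp; omega
      have h2 := ih h.2
      cases i with
      | zero => simp [ha, this]
      | succ i => simp [ha, this]; have := h2 i; simp_all

lemma galois (lam : Multiset ℕ) (j i : ℕ) : j < partNth lam i ↔ i < conjNth lam j := by
  rw [partNth_dl, list_galois _ (dl_pairwise lam), conjNth]
  conv_rhs => rw [← dl_coe lam]
  rw [Multiset.filter_coe, Multiset.coe_card]

lemma partNth_anti (lam : Multiset ℕ) {i i' : ℕ} (h : i ≤ i') :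
    partNth lam i' ≤ partNth lam i := by
  by_contra hc
  push Not at hc
  have h1 := (galois lam _ _).1 hc
  have h2 := (galois lam (partNth lam i) i).2 (by omega)
  omega

lemma conjNth_anti (lam : Multiset ℕ) {i i' : ℕ} (h : i ≤ i') :
    conjNth lam i' ≤ conjNth lam i := by
  by_contra hc
  push Not at hc
  have h1 := (galois lam _ _).2 hc
  have h2 := (galois lam i (conjNth lam i)).1 (by omega)
  omega

lemma conjNth_le (lam : Multiset ℕ) (j : ℕ) : conjNth lam j ≤ Multiset.card lam :=
  Multiset.card_le_card (Multiset.filter_le _ _)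

lemma partNth_zero (lam : Multiset ℕ) {i : ℕ} (h : Multiset.card lam ≤ i) : partNth lam i = 0 := by
  by_contra hc
  have := (galois lam 0 i).1 (by omega)
  have := conjNth_le lam 0
  omega

lemma list_sum_getD (l : List ℕ) (L : ℕ) (h : l.length ≤ L) :
    ∑ i ∈ Finset.range L, l.getD i 0 = l.sum := by
  induction l generalizing L with
  | nil => simp
  | cons a l ih =>
    cases L with
    | zero => simp at h
    | succ L =>
      rw [Finset.sum_range_succ']
      simp at h
      have := ih L h
      simp only [List.getD_cons_succ, List.getD_cons_zero, List.sum_cons, this]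
      omega

lemma sum_partNth (lam : Multiset ℕ) (L : ℕ) (h : Multiset.card lam ≤ L) :
    ∑ i ∈ Finset.range L, partNth lam i = lam.sum := by
  simp only [partNth_dl]
  rw [list_sum_getD _ _ (by rw [dl_length]; exact h), ← Multiset.sum_coe, dl_coe]

lemma conjNth_zero (lam : Multiset ℕ) (hp : ∀ m ∈ lam, 0 < m) : conjNth lam 0 = Multiset.card lam := by
  unfold conjNth
  rw [Multiset.filter_eq_self.2 hp]

lemma partNth_inj (lam mu : Multiset ℕ) (hl : ∀ m ∈ lam, 0 < m) (hm : ∀ m ∈ mu, 0 < m)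
    (h : ∀ i, partNth lam i = partNth mu i) : lam = mu := by
  have hc : Multiset.card lam = Multiset.card mu := by
    rw [← conjNth_zero lam hl, ← conjNth_zero mu hm]
    apply le_antisymm
    · by_contra hc
      push Not at hc
      have := (galois lam _ _).2 hc
      rw [h, galois] at this
      omega
    · by_contra hc
      push Not at hc
      have := (galois mu _ _).2 hc
      rw [← h, galois] at this
      omega
  rw [← dl_coe lam, ← dl_coe mu]
  congr 1
  apply List.ext_getElem
  · rw [dl_length, dl_length, hc]
  · intro i h1 h2
    have := h i
    rw [partNth_dl, partNth_dl, List.getD_eq_getElem _ _ h1, List.getD_eq_getElem _ _ h2] at this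
    exact this

/-- beads -/
def bead (lam : Multiset ℕ) (L i : ℕ) : ℕ := partNth lam i + (L - 1 - i)

def beads (lam : Multiset ℕ) (L : ℕ) : Finset ℕ := (Finset.range L).image (bead lam L)

lemma bead_lt (lam : Multiset ℕ) {L i i' : ℕ} (h : i < i') (h' : i' < L) :
    bead lam L i' < bead lam L i := by
  have := partNth_anti lam h.le
  unfold bead
  omega

lemma bead_injOn (lam : Multiset ℕ) (L : ℕ) : Set.InjOn (bead lam L) (Finset.range L) := by
  intro i hi j hj hij
  simp at hi hj
  rcases lt_trichotomy i j with h | h | h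
  · have := bead_lt lam h hj; omega
  · exact h
  · have := bead_lt lam h hi; omega

lemma beads_card (lam : Multiset ℕ) (L : ℕ) : (beads lam L).card = L := by
  rw [beads, Finset.card_image_of_injOn (bead_injOn lam L), Finset.card_range]

lemma beads_sum (lam : Multiset ℕ) (L : ℕ) (h : Multiset.card lam ≤ L) :
    2 * (∑ x ∈ beads lam L, x : ℕ) + L = 2 * lam.sum + L * L := by
  rw [beads, Finset.sum_image (bead_injOn lam L)]
  unfold bead
  rw [Finset.sum_add_distrib, sum_partNth lam L h, Finset.sum_range_reflect (fun i => i)]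
  have := Finset.sum_range_id_mul_two L
  cases L with
  | zero => simp
  | succ L => simp at *; nlinarith

lemma beads_inj (lam mu : Multiset ℕ) (L : ℕ) (hl : ∀ m ∈ lam, 0 < m) (hm : ∀ m ∈ mu, 0 < m)
    (h1 : Multiset.card lam ≤ L) (h2 : Multiset.card mu ≤ L) (h : beads lam L = beads mu L) :
    lam = mu := by
  apply partNth_inj _ _ hl hm
  have key : ∀ i < L, bead lam L i = bead mu L i := by
    intro i
    induction i using Nat.strong_induction_on with
    | _ i ih =>
      intro hi
      have aux : ∀ a b : Multiset ℕ, beads a L = beads b L → 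
          (∀ k < i, k < L → bead a L k = bead b L k) → bead a L i ≤ bead b L i := by
        intro a b hab ihab
        have : bead a L i ∈ beads b L := by
          rw [← hab]; exact Finset.mem_image_of_mem _ (Finset.mem_range.2 hi)
        obtain ⟨k, hk, hk'⟩ := Finset.mem_image.1 this
        rw [Finset.mem_range] at hk
        rcases lt_trichotomy k i with h | h | h
        · have e1 := ihab k h hk
          have := bead_lt a h hi
          omega
        · subst h; omega
        · have := bead_lt b h hk; omega
      exact le_antisymm (aux _ _ h ih) (aux _ _ h.symm (fun k hk hk' => (ih k hk hk').symm))
  intro i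
  by_cases hi : i < L
  · have := key i hi
    unfold bead at this
    omega
  · rw [partNth_zero _ (by omega), partNth_zero _ (by omega)]

/-- inversions -/
def inv (e : ℕ) (X : Finset ℕ) : ℕ :=
  (X.sigma (fun x => (Finset.range x).filter (fun y => y ∉ X ∧ e ∣ x - y))).card

lemma hooks_le_inv (e : ℕ) (lam : Multiset ℕ) (L : ℕ) (h : Multiset.card lam ≤ L) :
    ((cellsOf lam).filter (fun c => e ∣ hookLen lam c)).card ≤ inv e (beads lam L) := by
  unfold inv
  apply Finset.card_le_card_of_injOn
    (fun c => (⟨bead lam L c.1, c.2 + (L - conjNth lam c.2)⟩ : Σ _ : ℕ, ℕ))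
  · rintro ⟨i, j⟩ hc
    simp only [cellsOf, Finset.coe_filter, Finset.mem_filter, Finset.mem_product, Finset.mem_range, Set.mem_ofPred_eq] at hc
    obtain ⟨⟨⟨hi, hj⟩, hij⟩, hd⟩ := hc
    have hij' := (galois lam _ _).1 hij
    have hcj := conjNth_le lam j
    have hk : hookLen lam (i, j) = bead lam L i - (j + (L - conjNth lam j)) := by
      simp only [hookLen, bead]; omega
    simp only [Finset.coe_sigma, Set.mem_sigma_iff, Finset.mem_coe, Finset.mem_filter, Finset.mem_range]
    refine ⟨Finset.mem_image_of_mem _ (by simp; omega), ?_, ?_, ?_⟩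
    · simp only [bead]; omega
    · intro hm
      obtain ⟨k, hk, hk'⟩ := Finset.mem_image.1 hm
      rw [Finset.mem_range] at hk
      by_cases hkj : k < conjNth lam j
      · have := (galois lam _ _).2 hkj
        simp only [bead] at hk'; omega
      · have : ¬ j < partNth lam k := fun hh => hkj ((galois lam _ _).1 hh)
        simp only [bead] at hk'; omega
    · rw [← hk]; exact hd
  · rintro ⟨i, j⟩ hc ⟨i', j'⟩ hc' heq
    simp only [cellsOf, Finset.coe_filter, Finset.mem_filter, Finset.mem_product, Finset.mem_range, Set.mem_ofPred_eq] at hc hc'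
    simp only [Sigma.mk.injEq, heq_eq_eq] at heq
    obtain ⟨h1, h2⟩ := heq
    have := bead_injOn lam L (by simp; omega) (by simp; omega) h1
    have a1 := conjNth_le lam j
    have a2 := conjNth_le lam j'
    have : j = j' := by
      rcases lt_trichotomy j j' with h | h | h
      · have := conjNth_anti lam h.le; omega
      · exact h
      · have := conjNth_anti lam h.le; omega
    simp [*]

lemma sum_rank (Y : Finset ℕ) : 
    2 * (∑ x ∈ Y, (Y.filter (fun y => y < x)).card) + Y.card = Y.card * Y.card := by
  induction Y using Finset.induction_on_max with
  | empty => simp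
  | insert a s hs ih =>
    have ha : a ∉ s := fun h => lt_irrefl _ (hs a h)
    rw [Finset.sum_insert ha, Finset.card_insert_of_notMem ha]
    have h1 : (insert a s).filter (fun y => y < a) = s := by
      rw [Finset.filter_insert]; simp
      exact hs
    have h2 : ∀ x ∈ s, ((insert a s).filter (fun y => y < x)).card = (s.filter (fun y => y < x)).card := by
      intro x hx
      rw [Finset.filter_insert, if_neg (by have := hs x hx; omega)]
    rw [h1, Finset.sum_congr rfl h2]
    nlinarith

lemma sum_distinct (Y : Finset ℕ) : Y.card * Y.card ≤ 2 * (∑ x ∈ Y, x) + Y.card := by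
  rw [← sum_rank Y]
  have : ∑ x ∈ Y, (Y.filter (fun y => y < x)).card ≤ ∑ x ∈ Y, x := by
    apply Finset.sum_le_sum
    intro x _
    calc _ ≤ (Finset.range x).card := Finset.card_le_card (by intro y; simp)
      _ = x := Finset.card_range x
  omega

/-- rank within residue class -/
def rk (e : ℕ) (X : Finset ℕ) (x : ℕ) : ℕ := (X.filter (fun y => y < x ∧ y % e = x % e)).card

lemma count_res (e : ℕ) (he : 0 < e) (x : ℕ) :
    ((Finset.range x).filter (fun y => y % e = x % e)).card = x / e := by
  have := Nat.count_modEq_card_eq_ceil x he x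
  rw [Nat.count_eq_card_filter_range] at this
  have h2 : ((Finset.range x).filter (fun y => y % e = x % e)).card = ((Finset.range x).filter (fun y => y ≡ x [MOD e])).card := rfl
  rw [h2]
  have h3 : (((x : ℚ) - (x % e : ℕ)) / e) = ((x / e : ℕ) : ℚ) := by
    have h4 : ((e * (x / e) + x % e : ℕ) : ℚ) = (x : ℚ) := by rw [Nat.div_add_mod]
    push_cast at h4
    rw [div_eq_iff (by positivity), ← h4]; push_cast; ring
  rw [h3] at this
  rw [Int.ceil_natCast] at this
  exact_mod_cast this

lemma inv_eq (e : ℕ) (he : 0 < e) (X : Finset ℕ) :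
    inv e X + ∑ x ∈ X, rk e X x = ∑ x ∈ X, x / e := by
  unfold inv
  rw [Finset.card_sigma, ← Finset.sum_add_distrib]
  apply Finset.sum_congr rfl
  intro x hx
  rw [← count_res e he x, rk, ← Finset.card_union_of_disjoint]
  · congr 1
    ext y
    simp only [Finset.mem_union, Finset.mem_filter, Finset.mem_range]
    have key : y < x → (e ∣ x - y ↔ y % e = x % e) := fun h => by
      rw [← Nat.modEq_iff_dvd' h.le]; rfl
    constructor
    · rintro (⟨h1, h2, h3⟩ | ⟨h1, h2, h3⟩)
      · exact ⟨h1, (key h1).1 h3⟩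
      · exact ⟨h2, h3⟩
    · rintro ⟨h1, h2⟩
      by_cases hy : y ∈ X
      · exact Or.inr ⟨hy, h1, h2⟩
      · exact Or.inl ⟨h1, hy, (key h1).2 h2⟩
  · rw [Finset.disjoint_left]
    intro y h1 h2
    simp only [Finset.mem_filter] at h1 h2
    exact h1.2.1 h2.1

lemma inv_eq2 (e : ℕ) (he : 0 < e) (X : Finset ℕ) :
    e * inv e X + ∑ x ∈ X, (x % e + e * rk e X x) = ∑ x ∈ X, x := by
  have h := inv_eq e he X
  have h2 : ∑ x ∈ X, x = e * ∑ x ∈ X, x / e + ∑ x ∈ X, x % e := by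
    rw [Finset.mul_sum, ← Finset.sum_add_distrib]
    exact Finset.sum_congr rfl (fun x _ => (Nat.div_add_mod x e).symm)
  rw [h2, ← h, Finset.sum_add_distrib, ← Finset.mul_sum]
  ring

lemma inv_le (e : ℕ) (he : 0 < e) (X : Finset ℕ) :
    2 * (e * inv e X) + X.card * X.card ≤ 2 * (∑ x ∈ X, x) + X.card := by
  have h := inv_eq2 e he X
  have hinj : Set.InjOn (fun x => x % e + e * rk e X x) X := by
    intro x hx y hy hxy
    simp only at hxy
    have hm : x % e = y % e := by
      have := congrArg (· % e) hxy
      simpa using this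
    have hr : rk e X x = rk e X y := by
      rw [hm] at hxy
      exact Nat.eq_of_mul_eq_mul_left he (by omega)
    have aux : ∀ x ∈ X, ∀ y ∈ X, x % e = y % e → x < y → rk e X x < rk e X y := by
      intro x hx y hy hm hlt
      apply Finset.card_lt_card
      rw [Finset.ssubset_iff_of_subset]
      · refine ⟨x, ?_, ?_⟩
        · simp [hx, hlt, hm]
        · simp
      · intro z
        simp only [Finset.mem_filter]
        rintro ⟨a, b, c⟩
        exact ⟨a, by omega, by omega⟩
    rcases lt_trichotomy x y with hh | hh | hh
    · have := aux x hx y hy hm hh; omega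
    · exact hh
    · have := aux y hy x hx hm.symm hh; omega
  have h3 := sum_distinct (X.image (fun x => x % e + e * rk e X x))
  rw [Finset.card_image_of_injOn hinj, Finset.sum_image hinj] at h3
  omega

/-- charge -/
def chg (X : Finset ℕ) : ℤ := ∑ x ∈ X, (if x % 2 = 0 then 1 else -1 : ℤ)

lemma chg_eq (X : Finset ℕ) : chg X =
    ((X.filter (fun x => x % 2 = 0)).card : ℤ) - ((X.filter (fun x => ¬ x % 2 = 0)).card : ℤ) := by
  unfold chg
  rw [Finset.sum_ite]
  simp
  ring

lemma inv_two (X : Finset ℕ) :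
    4 * (inv 2 X : ℤ) + chg X * (chg X - 1) + X.card * (X.card - 1) = 2 * ((∑ x ∈ X, x : ℕ) : ℤ) := by
  have h := inv_eq2 2 (by norm_num) X
  set E := X.filter (fun x => x % 2 = 0) with hE
  set O := X.filter (fun x => ¬ x % 2 = 0) with hO
  have hc : X.card = E.card + O.card := (Finset.card_filter_add_card_filter_not _).symm
  have hs : ∑ x ∈ X, (x % 2 + 2 * rk 2 X x) = ∑ x ∈ E, (x % 2 + 2 * rk 2 X x) + ∑ x ∈ O, (x % 2 + 2 * rk 2 X x) :=
    (Finset.sum_filter_add_sum_filter_not _ _ _).symm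
  have h1 : ∑ x ∈ E, (x % 2 + 2 * rk 2 X x) = 2 * ∑ x ∈ E, (E.filter (fun y => y < x)).card := by
    rw [Finset.mul_sum]
    apply Finset.sum_congr rfl
    intro x hx
    have hx2 := (Finset.mem_filter.1 hx).2
    rw [hx2, rk, zero_add]
    congr 2
    ext y
    simp only [hE, Finset.mem_filter]
    constructor
    · rintro ⟨a, b, c⟩; exact ⟨⟨a, by omega⟩, b⟩
    · rintro ⟨⟨a, b⟩, c⟩; exact ⟨a, c, by omega⟩
  have h2 : ∑ x ∈ O, (x % 2 + 2 * rk 2 X x) = O.card + 2 * ∑ x ∈ O, (O.filter (fun y => y < x)).card := by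
    rw [Finset.mul_sum, Finset.card_eq_sum_ones, ← Finset.sum_add_distrib]
    apply Finset.sum_congr rfl
    intro x hx
    have hx2 := (Finset.mem_filter.1 hx).2
    rw [rk]
    congr 1
    · omega
    congr 2
    ext y
    simp only [hO, Finset.mem_filter]
    constructor
    · rintro ⟨a, b, c⟩; exact ⟨⟨a, by omega⟩, b⟩
    · rintro ⟨⟨a, b⟩, c⟩; exact ⟨a, c, by omega⟩
  have r1 := sum_rank E
  have r2 := sum_rank O
  rw [chg_eq, ← hE, ← hO, hc, ← h, hs, h1, h2]
  generalize ∑ x ∈ E, (E.filter (fun y => y < x)).card = u at *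
  generalize ∑ x ∈ O, (O.filter (fun y => y < x)).card = v at *
  zify at r1 r2
  push_cast
  linarith

/-- number of hooks divisible by e -/
def nh (e : ℕ) (lam : Multiset ℕ) : ℕ := ((cellsOf lam).filter (fun c => e ∣ hookLen lam c)).card

lemma nh_le (e : ℕ) (he : 0 < e) (lam : Multiset ℕ) : nh e lam ≤ lam.sum / e := by
  rw [Nat.le_div_iff_mul_le he]
  have h1 := hooks_le_inv e lam _ le_rfl
  have h2 := inv_le e he (beads lam (Multiset.card lam))
  have h3 := beads_sum lam _ le_rfl
  rw [beads_card] at h2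
  have h4 : e * nh e lam ≤ e * inv e (beads lam (Multiset.card lam)) := Nat.mul_le_mul_left _ h1
  rw [mul_comm]
  omega

lemma nh_two (lam : Multiset ℕ) (L : ℕ) (h : Multiset.card lam ≤ L) :
    4 * (nh 2 lam : ℤ) + chg (beads lam L) * (chg (beads lam L) - 1) ≤ 2 * (lam.sum : ℤ) := by
  have h1 := hooks_le_inv 2 lam L h
  have h2 := inv_two (beads lam L)
  have h3 := beads_sum lam L h
  rw [beads_card] at h2
  change nh 2 lam ≤ _ at h1
  generalize lam.sum = u at *
  generalize (∑ x ∈ beads lam L, x) = v at *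
  zify at h1 h3
  linarith

def cc (x : ℕ) : ℕ → ℕ
  | 0 => padicValNat 2 (x - 1)
  | j + 1 => padicValNat 2 (x ^ (2 ^ j) + 1)

lemma cc_pos (x : ℕ) (hx : Odd x) (h1 : 1 < x) (j : ℕ) : 1 ≤ cc x j := by
  cases j with
  | zero =>
    apply one_le_padicValNat_of_dvd (by omega)
    obtain ⟨k, rfl⟩ := hx
    simp
  | succ j =>
    apply one_le_padicValNat_of_dvd (by positivity)
    have : Odd (x ^ (2 ^ j)) := hx.pow
    obtain ⟨k, hk⟩ := this
    rw [hk]; exact ⟨k + 1, by ring⟩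

lemma odd_val (x h : ℕ) (hx : Odd x) (h1 : 1 < x) (hh : Odd h) :
    padicValNat 2 (x ^ h - 1) = padicValNat 2 (x - 1) := by
  have hg : x ^ h - 1 = (x - 1) * ∑ i ∈ Finset.range h, x ^ i := by
    rw [Nat.geomSum_eq h1]
    rw [Nat.mul_div_cancel']
    have := Nat.sub_dvd_pow_sub_pow x 1 h
    simpa using this
  have ho : Odd (∑ i ∈ Finset.range h, x ^ i) := by
    rw [Finset.odd_sum_iff_odd_card_odd]
    rw [Finset.filter_true_of_mem (fun i _ => hx.pow)]
    simpa using hh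
  rw [hg, padicValNat.mul (by omega) (by rintro h0; rw [h0] at ho; exact absurd ho (by decide))]
  rw [padicValNat.eq_zero_of_not_dvd (n := ∑ i ∈ Finset.range h, x ^ i)]
  · rfl
  · intro hd
    exact (Nat.not_even_iff_odd.2 ho) (even_iff_two_dvd.2 hd)

lemma val_pow (M : ℕ) : ∀ x h : ℕ, Odd x → 1 < x → 0 < h → h < 2 ^ M →
    padicValNat 2 (x ^ h - 1) = ∑ j ∈ Finset.range M, if 2 ^ j ∣ h then cc x j else 0 := by
  induction M with
  | zero => intro x h _ _ h0 h1; simp at h1; omega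
  | succ M ih =>
    intro x h hx h1 h0 hM
    rw [Finset.sum_range_succ']
    rcases Nat.even_or_odd' h with ⟨k, rfl | rfl⟩
    · have hx2 : 1 < x ^ 2 := Nat.one_lt_pow (by norm_num) h1
      have e := ih (x ^ 2) k hx.pow hx2 (by omega) (by rw [pow_succ] at hM; omega)
      rw [← pow_mul] at e
      rw [e]
      cases M with
      | zero => simp at hM; omega
      | succ M =>
        rw [Finset.sum_range_succ', Finset.sum_range_succ']
        have e0 : cc (x ^ 2) 0 = cc x 1 + cc x 0 := by
          simp only [cc]
          have : x ^ 2 - 1 = (x ^ 2 ^ 0 + 1) * (x - 1) := by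
            have := Nat.sq_sub_sq x 1
            simpa using this
          rw [this, padicValNat.mul (by positivity) (by omega)]
        have e1 : ∀ j, cc (x ^ 2) (j + 1) = cc x (j + 1 + 1) := by
          intro j
          simp only [cc]
          rw [← pow_mul, ← pow_succ']
        have e2 : ∀ j, (2 ^ (j + 1) ∣ 2 * k) ↔ 2 ^ j ∣ k := by
          intro j
          rw [pow_succ', Nat.mul_dvd_mul_iff_left (by norm_num)]
        simp only [e0, e1, e2]
        simp
        omega
    · rw [odd_val x _ hx h1 ⟨k, rfl⟩]
      have e2 : ∀ j, ¬ (2 ^ (j + 1) ∣ 2 * k + 1) := by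
        intro j hj
        have : 2 ∣ 2 * k + 1 := dvd_trans (Dvd.intro_left (2 ^ j) rfl) hj
        omega
      simp [e2, cc]

/-- valuation of psi -/
def VV (x m : ℕ) : ℕ := ∑ i ∈ Finset.range m, padicValNat 2 (x ^ (i + 1) - 1)
def WW (x : ℕ) (lam : Multiset ℕ) : ℕ := ∑ c ∈ cellsOf lam, padicValNat 2 (x ^ hookLen lam c - 1)

lemma VV_eq (x m M : ℕ) (hx : Odd x) (h1 : 1 < x) (hM : m < 2 ^ M) :
    VV x m = ∑ j ∈ Finset.range M, cc x j * (m / 2 ^ j) := by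
  unfold VV
  rw [Finset.sum_congr rfl (fun i hi => val_pow M x (i + 1) hx h1 (by omega)
    (by rw [Finset.mem_range] at hi; omega)), Finset.sum_comm]
  apply Finset.sum_congr rfl
  intro j _
  rw [← Finset.sum_filter, Finset.sum_const, smul_eq_mul, mul_comm]
  congr 1
  exact Nat.card_multiples m (2 ^ j)

lemma WW_eq (x M : ℕ) (lam : Multiset ℕ) (hx : Odd x) (h1 : 1 < x)
    (hM : ∀ c ∈ cellsOf lam, hookLen lam c < 2 ^ M) :
    WW x lam = ∑ j ∈ Finset.range M, cc x j * nh (2 ^ j) lam := by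
  unfold WW
  rw [Finset.sum_congr rfl (fun c hc => val_pow M x (hookLen lam c) hx h1 (by
    simp only [cellsOf, Finset.mem_filter] at hc
    have := (galois lam _ _).1 hc.2
    unfold hookLen
    omega) (hM c hc)), Finset.sum_comm]
  apply Finset.sum_congr rfl
  intro j _
  rw [← Finset.sum_filter, Finset.sum_const, smul_eq_mul, mul_comm]
  rfl

lemma WW_le (x : ℕ) (lam : Multiset ℕ) (hx : Odd x) (h1 : 1 < x) :
    WW x lam + (lam.sum / 2 - nh 2 lam) ≤ VV x lam.sum := by
  obtain ⟨M, hM1, hM2, hM3⟩ : ∃ M, 2 ≤ M ∧ lam.sum < 2 ^ M ∧ ∀ c ∈ cellsOf lam, hookLen lam c < 2 ^ M := by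
    refine ⟨2 + lam.sum + ∑ c ∈ cellsOf lam, hookLen lam c, by omega, ?_, ?_⟩
    · exact lt_of_le_of_lt (by omega) Nat.lt_two_pow_self
    · intro c hc
      have := Finset.single_le_sum (f := hookLen lam) (fun _ _ => Nat.zero_le _) hc
      exact lt_of_le_of_lt (by omega) Nat.lt_two_pow_self
  rw [VV_eq x _ M hx h1 hM2, WW_eq x M lam hx h1 hM3]
  have h1M : 1 ∈ Finset.range M := by simp; omega
  rw [← Finset.add_sum_erase _ _ h1M, ← Finset.add_sum_erase _ (fun j => cc x j * (lam.sum / 2 ^ j)) h1M]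
  have h2 : ∑ j ∈ (Finset.range M).erase 1, cc x j * nh (2 ^ j) lam ≤ ∑ j ∈ (Finset.range M).erase 1, cc x j * (lam.sum / 2 ^ j) := by
    apply Finset.sum_le_sum
    intro j _
    exact Nat.mul_le_mul_left _ (nh_le _ (by positivity) lam)
  have h3 : cc x 1 * nh (2 ^ 1) lam + (lam.sum / 2 - nh 2 lam) ≤ cc x 1 * (lam.sum / 2 ^ 1) := by
    have a := nh_le 2 (by norm_num) lam
    have b := cc_pos x hx h1 1
    obtain ⟨t, ht⟩ := Nat.exists_eq_add_of_le a
    rw [pow_one, ht]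
    have : nh 2 lam + t - nh 2 lam = t := by omega
    rw [this]
    nlinarith
  omega

lemma VV_add (x a b : ℕ) (hx : Odd x) (h1 : 1 < x) : VV x a + VV x b ≤ VV x (a + b) := by
  have hM : a + b < 2 ^ (a + b) := Nat.lt_two_pow_self
  rw [VV_eq x a _ hx h1 (lt_of_le_of_lt (by omega) hM), VV_eq x b _ hx h1 (lt_of_le_of_lt (by omega) hM),
    VV_eq x _ _ hx h1 hM, ← Finset.sum_add_distrib]
  apply Finset.sum_le_sum
  intro j _
  rw [← mul_add]
  exact Nat.mul_le_mul_left _ Nat.div_add_div_le_add_div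

lemma VV_sum {ι : Type*} (x : ℕ) (hx : Odd x) (h1 : 1 < x) (s : Finset ι) (g : ι → ℕ) :
    ∑ f ∈ s, VV x (g f) ≤ VV x (∑ f ∈ s, g f) := by
  classical
  induction s using Finset.induction_on with
  | empty => simp
  | insert a s ha ih =>
    rw [Finset.sum_insert ha, Finset.sum_insert ha]
    exact le_trans (by omega) (VV_add x _ _ hx h1)

lemma VV_mul (x d m : ℕ) (hd : 0 < d) (hx : Odd x) (h1 : 1 < x) :
    VV (x ^ d) m + (d - 1) * m ≤ VV x (d * m) := by
  induction m with
  | zero => simp [VV]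
  | succ m ih =>
    obtain ⟨e, rfl⟩ : ∃ e, d = e + 1 := ⟨d - 1, by omega⟩
    have hs : VV x ((e + 1) * (m + 1)) = VV x ((e + 1) * m) + (∑ i ∈ Finset.range e, padicValNat 2 (x ^ ((e + 1) * m + i + 1) - 1) + padicValNat 2 (x ^ ((e + 1) * m + e + 1) - 1)) := by
      rw [← Finset.sum_range_succ (fun i => padicValNat 2 (x ^ ((e + 1) * m + i + 1) - 1))]
      unfold VV
      rw [mul_add, mul_one, Finset.sum_range_add]
    have h2 : VV (x ^ (e + 1)) (m + 1) = VV (x ^ (e + 1)) m + padicValNat 2 (x ^ ((e + 1) * m + e + 1) - 1) := by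
      unfold VV
      rw [Finset.sum_range_succ, ← pow_mul]
      congr 3
    have h3 : e ≤ ∑ i ∈ Finset.range e, padicValNat 2 (x ^ ((e + 1) * m + i + 1) - 1) := by
      calc e = ∑ i ∈ Finset.range e, 1 := by simp
        _ ≤ _ := by
          apply Finset.sum_le_sum
          intro i _
          have hlt : 1 < x ^ ((e + 1) * m + i + 1) := Nat.one_lt_pow (by omega) h1
          apply one_le_padicValNat_of_dvd (by omega)
          have ho : Odd (x ^ ((e + 1) * m + i + 1)) := hx.pow
          obtain ⟨k, hk⟩ := ho
          rw [hk]; simp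
    rw [hs, h2]
    simp only [Nat.add_sub_cancel] at *
    rw [mul_add]
    omega

lemma padicValRat_prod {ι : Type*} (s : Finset ι) (g : ι → ℚ) (h : ∀ i ∈ s, g i ≠ 0) :
    padicValRat 2 (∏ i ∈ s, g i) = ∑ i ∈ s, padicValRat 2 (g i) := by
  classical
  induction s using Finset.induction_on with
  | empty => simp
  | insert a s ha ih =>
    rw [Finset.prod_insert ha, Finset.sum_insert ha, padicValRat.mul (h a (by simp))
      (Finset.prod_ne_zero_iff.2 (fun i hi => h i (by simp [hi]))), ih (fun i hi => h i (by simp [hi]))]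

lemma cast_pow_sub (x h : ℕ) (h1 : 1 < x) : ((x : ℚ) ^ h - 1) = ((x ^ h - 1 : ℕ) : ℚ) := by
  rw [Nat.cast_sub (Nat.one_le_pow _ _ (by omega))]; push_cast; rfl

lemma psi_val (x m : ℕ) (h1 : 1 < x) : psiPoly m (x : ℚ) ≠ 0 ∧ padicValRat 2 (psiPoly m (x : ℚ)) = (VV x m : ℤ) := by
  have hne : ∀ i ∈ Finset.Icc 1 m, (x : ℚ) ^ i - 1 ≠ 0 := by
    intro i hi
    rw [Finset.mem_Icc] at hi
    have : 1 < x ^ i := Nat.one_lt_pow (by omega) h1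
    rw [cast_pow_sub x i h1]
    exact_mod_cast (by omega)
  refine ⟨Finset.prod_ne_zero_iff.2 hne, ?_⟩
  unfold psiPoly VV
  rw [padicValRat_prod _ _ hne, Finset.range_eq_Ico, Finset.sum_Ico_add' (fun i => padicValNat 2 (x ^ i - 1))]
  push_cast
  apply Finset.sum_congr
  · ext; simp
    try omega
  · intro i _
    rw [cast_pow_sub x i h1, padicValRat.of_nat]

lemma hF_val (x : ℕ) (lam : Multiset ℕ) (hx : Odd x) (h1 : 1 < x) :
    hFactor lam (x : ℚ) ≠ 0 ∧ padicValRat 2 (hFactor lam (x : ℚ)) = - (WW x lam : ℤ) := by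
  have hne : ∀ c ∈ cellsOf lam, (x : ℚ) ^ hookLen lam c - 1 ≠ 0 := by
    intro c hc
    have hp : 0 < hookLen lam c := by
      simp only [cellsOf, Finset.mem_filter] at hc
      have := (galois lam _ _).1 hc.2
      unfold hookLen
      omega
    have : 1 < x ^ hookLen lam c := Nat.one_lt_pow (by omega) h1
    rw [cast_pow_sub x _ h1]
    exact_mod_cast (by omega)
  have hx0 : (x : ℚ) ^ alphaStat lam ≠ 0 := by
    have : (x : ℚ) ≠ 0 := by exact_mod_cast (by omega)
    positivity
  have hp := Finset.prod_ne_zero_iff.2 hne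
  refine ⟨div_ne_zero hx0 hp, ?_⟩
  unfold hFactor
  rw [padicValRat.div hx0 hp, padicValRat_prod _ _ hne]
  have e1 : padicValRat 2 ((x : ℚ) ^ alphaStat lam) = 0 := by
    have : ((x : ℚ) ^ alphaStat lam) = ((x ^ alphaStat lam : ℕ) : ℚ) := by push_cast; rfl
    rw [this, padicValRat.of_nat, padicValNat.eq_zero_of_not_dvd]
    · rfl
    · intro hd
      exact (Nat.not_even_iff_odd.2 hx.pow) (even_iff_two_dvd.2 hd)
  rw [e1, zero_sub, WW]
  push_cast
  congr 1
  apply Finset.sum_congr rfl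
  intro c _
  rw [cast_pow_sub x _ h1, padicValRat.of_nat]

lemma dMu_val (q : ℕ) (hodd : Odd q) (h1 : 1 < q) {F : Type*} [Field F] (n : ℕ)
    (μ : Polynomial F →₀ Multiset ℕ) (hμ : IsXn F n μ) :
    ((∑ f ∈ μ.support, ((f.natDegree - 1) * (μ f).sum + ((μ f).sum / 2 - nh 2 (μ f))) : ℕ) : ℤ) ≤
      padicValRat 2 (dMu q n μ) := by
  obtain ⟨hs, hp, hn⟩ := hμ
  have hd : ∀ f ∈ μ.support, 0 < f.natDegree := fun f hf => (hs f hf).2.1.natDegree_pos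
  have hqd : ∀ f ∈ μ.support, 1 < q ^ f.natDegree := fun f hf =>
    Nat.one_lt_pow (by have := hd f hf; omega) h1
  have hH : ∀ f ∈ μ.support, hFactor (μ f) ((q : ℚ) ^ f.natDegree) ≠ 0 ∧
      padicValRat 2 (hFactor (μ f) ((q : ℚ) ^ f.natDegree)) = - (WW (q ^ f.natDegree) (μ f) : ℤ) := by
    intro f hf
    have := hF_val (q ^ f.natDegree) (μ f) hodd.pow (hqd f hf)
    push_cast at this
    exact this
  unfold dMu
  rw [padicValRat.mul (psi_val q n h1).1 (Finset.prod_ne_zero_iff.2 (fun f hf => (hH f hf).1)),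
    padicValRat_prod _ _ (fun f hf => (hH f hf).1), (psi_val q n h1).2,
    Finset.sum_congr rfl (fun f hf => (hH f hf).2)]
  have hn' : ∑ f ∈ μ.support, f.natDegree * (μ f).sum = n := by
    rw [← hn]
    exact Finset.sum_congr rfl (fun f _ => mul_comm _ _)
  have k1 := VV_sum q hodd h1 μ.support (fun f => f.natDegree * (μ f).sum)
  rw [hn'] at k1
  have k2 : ∑ f ∈ μ.support, ((f.natDegree - 1) * (μ f).sum + ((μ f).sum / 2 - nh 2 (μ f))) + ∑ f ∈ μ.support, WW (q ^ f.natDegree) (μ f)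
      ≤ ∑ f ∈ μ.support, VV q (f.natDegree * (μ f).sum) := by
    rw [← Finset.sum_add_distrib]
    apply Finset.sum_le_sum
    intro f hf
    have a := VV_mul q f.natDegree (μ f).sum (hd f hf) hodd h1
    have b := WW_le (q ^ f.natDegree) (μ f) hodd.pow (hqd f hf)
    omega
  rw [Finset.sum_neg_distrib]
  have k3 := k2.trans k1
  zify at k3
  push_cast
  linarith

def QQ (L : ℕ) (m t : ℤ) : Set (Finset ℕ) :=
  {X | X.card = L ∧ 2 * ((∑ x ∈ X, x : ℕ) : ℤ) = 2 * m + L * (L - 1) ∧ chg X = t}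

def RR (L : ℕ) (m : ℤ) : Set (Finset ℕ) :=
  {X | X.card = L ∧ 2 * ((∑ x ∈ X, x : ℕ) : ℤ) = 2 * m + L * (L - 1)}

lemma RR_finite (L : ℕ) (m : ℤ) : (RR L m).Finite := by
  apply Set.Finite.subset (Finset.finite_toSet ((Finset.range ((2 * m + L * (L - 1)).toNat + 1)).powerset))
  intro X hX
  obtain ⟨_, h2⟩ := hX
  simp only [Finset.coe_powerset, Set.mem_preimage, Set.mem_powerset_iff]
  intro x hx
  have := Finset.single_le_sum (f := fun x : ℕ => x) (fun _ _ => Nat.zero_le _) hx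
  simp only [Finset.coe_range, Set.mem_Iio]
  omega

lemma QQ_subset (L : ℕ) (m t : ℤ) : QQ L m t ⊆ RR L m := fun _ h => ⟨h.1, h.2.1⟩

lemma QQ_finite (L : ℕ) (m t : ℤ) : (QQ L m t).Finite := (RR_finite L m).subset (QQ_subset L m t)

def f1 (x : ℕ) : ℕ := if x % 2 = 0 then x + 2 else x

lemma f1_inj : Function.Injective f1 := by
  intro x y h
  unfold f1 at h
  split_ifs at h <;> omega

lemma f1_mod (x : ℕ) : f1 x % 2 = x % 2 := by
  unfold f1
  split_ifs <;> omega

lemma f1_ne (x : ℕ) : f1 x ≠ 0 := by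
  unfold f1
  split_ifs <;> omega

lemma chg_image (X : Finset ℕ) (f : ℕ → ℕ) (hf : Function.Injective f) (hm : ∀ x, f x % 2 = x % 2) :
    chg (X.image f) = chg X := by
  unfold chg
  rw [Finset.sum_image hf.injOn]
  simp [hm]

lemma chg_insert (X : Finset ℕ) (a : ℕ) (h : a ∉ X) :
    chg (insert a X) = (if a % 2 = 0 then 1 else -1) + chg X := by
  unfold chg
  rw [Finset.sum_insert h]

lemma q1 (L : ℕ) (m t : ℤ) : (QQ L m t).ncard ≤ (QQ (L + 1) (m + t) (t + 1)).ncard := by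
  have h0 : ∀ X : Finset ℕ, 0 ∉ X.image f1 := by
    intro X h
    obtain ⟨x, _, hx⟩ := Finset.mem_image.1 h
    exact f1_ne x hx
  apply Set.ncard_le_ncard_of_injOn (fun X => insert 0 (X.image f1)) _ _ (QQ_finite _ _ _)
  · rintro X ⟨h1, h2, h3⟩
    refine ⟨?_, ?_, ?_⟩
    · rw [Finset.card_insert_of_notMem (h0 X), Finset.card_image_of_injective _ f1_inj, h1]
    · rw [Finset.sum_insert (h0 X), Finset.sum_image f1_inj.injOn]
      have e1 : ∑ x ∈ X, f1 x = ∑ x ∈ X, x + 2 * (X.filter (fun x => x % 2 = 0)).card := by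
        rw [Finset.card_filter, Finset.mul_sum, ← Finset.sum_add_distrib]
        apply Finset.sum_congr rfl
        intro x _
        unfold f1
        split_ifs <;> simp
      have e2 := chg_eq X
      have e3 : (X.filter (fun x => x % 2 = 0)).card + (X.filter (fun x => ¬ x % 2 = 0)).card = X.card := Finset.card_filter_add_card_filter_not _
      rw [e1]
      generalize (∑ x ∈ X, x) = u at *
      push_cast
      rw [h1] at e3
      generalize (X.filter (fun x => x % 2 = 0)).card = v at *
      generalize (X.filter (fun x => ¬ x % 2 = 0)).card = w at *
      zify at e3
      rw [h3] at e2
      nlinarith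
    · rw [chg_insert _ _ (h0 X), chg_image X _ f1_inj f1_mod, h3]; simp; ring
  · intro X hX Y hY h
    simp only at h
    have := congrArg (fun Z => Finset.erase Z 0) h
    simp only [Finset.erase_insert (h0 _)] at this
    exact Finset.image_injective f1_inj this

lemma q2 (L : ℕ) (m t : ℤ) : (QQ L m t).ncard ≤ (QQ (L + 2) m t).ncard := by
  have hi : Function.Injective (fun x : ℕ => x + 2) := fun a b h => by simpa using h
  have h1' : ∀ X : Finset ℕ, 1 ∉ X.image (fun x => x + 2) := by
    intro X h
    obtain ⟨x, _, hx⟩ := Finset.mem_image.1 h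
    omega
  have h0 : ∀ X : Finset ℕ, 0 ∉ insert 1 (X.image (fun x => x + 2)) := by
    intro X h
    rw [Finset.mem_insert] at h
    rcases h with h | h
    · omega
    obtain ⟨x, _, hx⟩ := Finset.mem_image.1 h
    omega
  apply Set.ncard_le_ncard_of_injOn (fun X => insert 0 (insert 1 (X.image (fun x => x + 2)))) _ _ (QQ_finite _ _ _)
  · rintro X ⟨h1, h2, h3⟩
    refine ⟨?_, ?_, ?_⟩
    · rw [Finset.card_insert_of_notMem (h0 X), Finset.card_insert_of_notMem (h1' X), Finset.card_image_of_injective _ hi, h1]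
    · rw [Finset.sum_insert (h0 X), Finset.sum_insert (h1' X), Finset.sum_image hi.injOn, Finset.sum_add_distrib]
      simp only [Finset.sum_const, h1, smul_eq_mul]
      generalize (∑ x ∈ X, x) = u at *
      push_cast
      linarith
    · rw [chg_insert _ _ (h0 X), chg_insert _ _ (h1' X), chg_image X _ hi (by intro x; omega), h3]; simp
  · intro X hX Y hY h
    simp only at h
    have := congrArg (fun Z => Finset.erase (Finset.erase Z 0) 1) h
    simp only [Finset.erase_insert (h0 _), Finset.erase_insert (h1' _)] at this
    exact Finset.image_injective hi this

def padS (X : Finset ℕ) : Finset ℕ := insert (X.sup id + 2) (X.erase (X.sup id))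

lemma padS_notMem (X : Finset ℕ) : X.sup id + 2 ∉ X.erase (X.sup id) := by
  intro h
  have := Finset.le_sup (f := id) (Finset.mem_of_mem_erase h)
  simp only [id] at this
  omega

lemma padS_sup (X : Finset ℕ) : (padS X).sup id = X.sup id + 2 := by
  unfold padS
  rw [Finset.sup_insert]
  have : (X.erase (X.sup id)).sup id ≤ X.sup id := Finset.sup_mono (Finset.erase_subset _ _)
  simp only [id] at *
  exact max_eq_left (by omega)

lemma q3 (L : ℕ) (hL : 0 < L) (m t : ℤ) : (QQ L m t).ncard ≤ (QQ L (m + 2) t).ncard := by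
  have hmem : ∀ X ∈ QQ L m t, X.sup id ∈ X := by
    rintro X ⟨h1, _⟩
    have hne : X.Nonempty := Finset.card_pos.1 (by omega)
    obtain ⟨x, hx, hx'⟩ := Finset.exists_mem_eq_sup X hne id
    rw [hx']; exact hx
  apply Set.ncard_le_ncard_of_injOn padS _ _ (QQ_finite _ _ _)
  · rintro X hX
    have hm := hmem X hX
    obtain ⟨h1, h2, h3⟩ := hX
    refine ⟨?_, ?_, ?_⟩
    · rw [padS, Finset.card_insert_of_notMem (padS_notMem X), Finset.card_erase_of_mem hm]; omega
    · rw [padS, Finset.sum_insert (padS_notMem X)]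
      have := Finset.add_sum_erase X (fun x => x) hm
      generalize (∑ x ∈ X, x) = u at *
      generalize (∑ x ∈ X.erase (X.sup id), x) = v at *
      zify at this
      push_cast
      linarith
    · rw [padS, chg_insert _ _ (padS_notMem X)]
      have := Finset.add_sum_erase X (fun x => (if x % 2 = 0 then 1 else -1 : ℤ)) hm
      rw [← h3, chg, chg, ← this, Nat.add_mod_right]
  · intro X hX Y hY h
    have hs : X.sup id = Y.sup id := by
      have := padS_sup X
      rw [h, padS_sup Y] at this
      omega
    have h2 := congrArg (fun Z => Finset.erase Z (X.sup id + 2)) h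
    simp only [padS] at h2
    rw [Finset.erase_insert (padS_notMem X), hs, Finset.erase_insert (padS_notMem Y)] at h2
    rw [← Finset.insert_erase (hmem X hX), ← Finset.insert_erase (hmem Y hY), hs, h2]

lemma q1' (L : ℕ) (m t : ℤ) (j : ℕ) :
    (QQ L m t).ncard ≤ (QQ (L + j) (m + j * t + ((j * (j - 1) / 2 : ℕ) : ℤ)) (t + j)).ncard := by
  induction j with
  | zero => simp
  | succ j ih =>
    refine ih.trans ((q1 _ _ _).trans (le_of_eq ?_))
    have e : (j + 1) * (j + 1 - 1) / 2 = j * (j - 1) / 2 + j := by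
      have := Finset.sum_range_id j
      have h2 := Finset.sum_range_id (j + 1)
      rw [Finset.sum_range_succ] at h2
      omega
    rw [e]
    push_cast
    congr 2 <;> ring

lemma q2' (L : ℕ) (m t : ℤ) (k : ℕ) : (QQ L m t).ncard ≤ (QQ (L + 2 * k) m t).ncard := by
  induction k with
  | zero => simp
  | succ k ih => exact ih.trans (q2 _ _ _)

lemma q3' (L : ℕ) (hL : 0 < L) (m t : ℤ) (r : ℕ) : (QQ L m t).ncard ≤ (QQ L (m + 2 * r) t).ncard := by
  induction r with
  | zero => simp
  | succ k ih =>
    refine ih.trans ((q3 _ hL _ _).trans (le_of_eq ?_))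
    congr 2; push_cast; ring

lemma exists_beads (X : Finset ℕ) (L m : ℕ) (hc : X.card = L)
    (hs : 2 * ((∑ x ∈ X, x : ℕ) : ℤ) = 2 * m + L * (L - 1)) :
    ∃ p : Nat.Partition m, beads p.parts L = X := by
  obtain ⟨b, hb1, hb2⟩ : ∃ b : ℕ → ℕ, (∀ i, i + 1 < L → b (i + 1) < b i) ∧ (Finset.range L).image b = X := by
    refine ⟨fun i => if h : i < L then X.orderEmbOfFin hc ⟨L - 1 - i, by omega⟩ else 0, ?_, ?_⟩
    · intro i hi
      simp only [hi, show i < L by omega, dif_pos]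
      exact (X.orderEmbOfFin hc).strictMono (by simp only [Fin.mk_lt_mk]; omega)
    · ext x
      simp only [Finset.mem_image, Finset.mem_range]
      constructor
      · rintro ⟨i, hi, rfl⟩
        rw [dif_pos hi]
        exact Finset.orderEmbOfFin_mem X hc _
      · intro hx
        have : x ∈ Set.range (X.orderEmbOfFin hc) := by
          rw [Finset.range_orderEmbOfFin]; exact hx
        obtain ⟨k, rfl⟩ := this
        refine ⟨L - 1 - k, by omega, ?_⟩
        rw [dif_pos (by omega)]
        congr 1
        ext
        simp
        omega
  have hb3 : ∀ d i, i + d < L → b (i + d) + d ≤ b i := by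
    intro d
    induction d with
    | zero => intro i _; simp
    | succ d ih =>
      intro i hi
      have := ih i (by omega)
      have := hb1 (i + d) (by omega)
      have e : i + (d + 1) = i + d + 1 := rfl
      rw [e]
      omega
  have hb4 : ∀ i < L, L - 1 - i ≤ b i := by
    intro i hi
    have := hb3 (L - 1 - i) i (by omega)
    omega
  set a : ℕ → ℕ := fun i => b i - (L - 1 - i) with ha
  have ha2 : ∀ i k, i ≤ k → k < L → a k ≤ a i := by
    intro i k hik hk
    have h1 := hb3 (k - i) i (by omega)
    rw [show i + (k - i) = k by omega] at h1
    simp only [ha]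
    omega
  set lam : Multiset ℕ := ((Multiset.range L).map a).filter (fun x => 0 < x) with hlam
  have hconj : ∀ j, conjNth lam j = ((Finset.range L).filter (fun k => j < a k)).card := by
    intro j
    rw [conjNth, hlam, Multiset.filter_filter]
    rw [Multiset.filter_congr (q := fun x => j < x) (by intro x _; omega), Multiset.filter_map, Multiset.card_map]
    rfl
  have hpart : ∀ i < L, partNth lam i = a i := by
    intro i hi
    have : ∀ j, j < partNth lam i ↔ j < a i := by
      intro j
      rw [galois, hconj]
      constructor
      · intro h
        by_contra hn
        have : (Finset.range L).filter (fun k => j < a k) ⊆ Finset.range i := by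
          intro k hk
          simp only [Finset.mem_filter, Finset.mem_range] at *
          by_contra hki
          have := ha2 i k (by omega) hk.1
          omega
        have := Finset.card_le_card this
        rw [Finset.card_range] at this
        omega
      · intro h
        have : Finset.range (i + 1) ⊆ (Finset.range L).filter (fun k => j < a k) := by
          intro k hk
          simp only [Finset.mem_filter, Finset.mem_range] at *
          have := ha2 k i (by omega) hi
          omega
        have := Finset.card_le_card this
        rw [Finset.card_range] at this
        omega
    have h1 := this (partNth lam i)
    have h2 := this (a i)
    omega
  have hbeads : beads lam L = X := by
    rw [← hb2, beads]
    apply Finset.image_congr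
    intro i hi
    simp only [Finset.coe_range, Set.mem_Iio] at hi
    rw [bead, hpart i hi]
    have := hb4 i hi
    simp only [ha]
    omega
  have hcard : Multiset.card lam ≤ L := by
    rw [hlam]
    refine (Multiset.card_le_card (Multiset.filter_le _ _)).trans ?_
    simp
  have hsum : lam.sum = m := by
    have := beads_sum lam L hcard
    rw [hbeads] at this
    generalize lam.sum = u at *
    generalize (∑ x ∈ X, x) = v at *
    zify at this
    have : (2 * u : ℤ) = 2 * m := by linarith
    omega
  refine ⟨⟨lam, ?_, hsum⟩, hbeads⟩
  intro i hi
  rw [hlam, Multiset.mem_filter] at hi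
  exact hi.2

lemma RR_le (L m : ℕ) : (RR L m).ncard ≤ Fintype.card (Nat.Partition m) := by
  classical
  choose! g hg using fun (X : Finset ℕ) (h : X ∈ RR L m) => exists_beads X L m h.1 h.2
  rw [← Nat.card_eq_fintype_card, ← Set.ncard_univ]
  apply Set.ncard_le_ncard_of_injOn g (fun _ _ => Set.mem_univ _) _ Set.finite_univ
  intro X hX Y hY h
  rw [← hg X hX, ← hg Y hY, h]

lemma key_count (L m K B σ : ℕ) (t : ℤ) (hL : 0 < L) (ht : |t| ≤ B) (hσ : 2 * K * B + 4 * K * K ≤ σ) :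
    K * (QQ L m t).ncard ≤ Fintype.card (Nat.Partition (m + 2 * σ)) := by
  refine le_trans ?_ (RR_le (L + 4 * K) (m + 2 * σ))
  have h1 : ∀ i ∈ Finset.range K, (QQ L m t).ncard ≤ (QQ (L + 4 * K) ((m + 2 * σ : ℕ) : ℤ) (t + (4 * i : ℕ))).ncard := by
    intro i hi
    rw [Finset.mem_range] at hi
    have a := q1' L m t (4 * i)
    have b := q2' (L + 4 * i) (m + (4 * i : ℕ) * t + ((4 * i * (4 * i - 1) / 2 : ℕ) : ℤ)) (t + (4 * i : ℕ)) (2 * (K - i))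
    have e : L + 4 * i + 2 * (2 * (K - i)) = L + 4 * K := by omega
    rw [e] at b
    have hge : 0 ≤ (σ : ℤ) - 2 * i * t - i * (4 * i - 1) := by
      have h1 := (abs_le.1 ht).2
      have h2 : (i : ℤ) ≤ K := by exact_mod_cast hi.le
      have h3 : (2 * K * B + 4 * K * K : ℤ) ≤ σ := by exact_mod_cast hσ
      have h4 : (0 : ℤ) ≤ i := by positivity
      have h5 : (0 : ℤ) ≤ B := by positivity
      have h6 : (i : ℤ) * t ≤ K * B := (mul_le_mul_of_nonneg_left h1 h4).trans (mul_le_mul_of_nonneg_right h2 h5)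
      have h7 : (i : ℤ) * i ≤ K * K := mul_le_mul h2 h2 h4 (by positivity)
      nlinarith
    obtain ⟨r, hr⟩ := Int.eq_ofNat_of_zero_le hge
    have c := q3' (L + 4 * K) (by omega) (m + (4 * i : ℕ) * t + ((4 * i * (4 * i - 1) / 2 : ℕ) : ℤ)) (t + (4 * i : ℕ)) r
    have e2 : (m : ℤ) + (4 * i : ℕ) * t + ((4 * i * (4 * i - 1) / 2 : ℕ) : ℤ) + 2 * r = ((m + 2 * σ : ℕ) : ℤ) := by
      rw [← hr]
      have : 4 * i * (4 * i - 1) / 2 = 2 * i * (4 * i - 1) := by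
        rw [show 4 * i * (4 * i - 1) = 2 * (2 * i * (4 * i - 1)) by ring]
        omega
      rw [this]
      rcases Nat.eq_zero_or_pos i with rfl | hi0
      · simp
      · push_cast [Nat.cast_sub (show 1 ≤ 4 * i by omega)]
        ring
    rw [e2] at c
    exact a.trans (b.trans c)
  have h2 := Finset.sum_le_sum h1
  rw [Finset.sum_const, Finset.card_range, smul_eq_mul] at h2
  refine h2.trans ?_
  have hfin : ∀ i : ℕ, ((QQ_finite (L + 4 * K) ((m + 2 * σ : ℕ) : ℤ) (t + (4 * i : ℕ))).toFinset : Finset (Finset ℕ)).card = (QQ (L + 4 * K) ((m + 2 * σ : ℕ) : ℤ) (t + (4 * i : ℕ))).ncard := fun i =>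
    (Set.ncard_eq_toFinset_card _ _).symm
  rw [← Finset.sum_congr rfl (fun i _ => hfin i), ← Finset.card_biUnion]
  · rw [Set.ncard_eq_toFinset_card _ (RR_finite _ _)]
    apply Finset.card_le_card
    intro X hX
    rw [Finset.mem_biUnion] at hX
    obtain ⟨i, _, hi⟩ := hX
    rw [Set.Finite.mem_toFinset] at hi ⊢
    have := QQ_subset _ _ _ hi
    exact_mod_cast this
  · intro i _ j _ hij
    rw [Function.onFun, Finset.disjoint_left]
    intro X h1 h2
    rw [Set.Finite.mem_toFinset] at h1 h2
    have := h1.2.2.symm.trans h2.2.2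
    omega

lemma bad_count (m K B σ : ℕ) (hm : 0 < m) (hσ : 2 * K * B + 4 * K * K ≤ σ) :
    K * Nat.card {p : Nat.Partition m // |chg (beads p.parts m)| ≤ B} ≤
      (2 * B + 1) * Fintype.card (Nat.Partition (m + 2 * σ)) := by
  classical
  have h1 : Nat.card {p : Nat.Partition m // |chg (beads p.parts m)| ≤ B} ≤
      ∑ t ∈ Finset.Icc (-(B : ℤ)) B, (QQ m m t).ncard := by
    have hcl : ∀ p : Nat.Partition m, Multiset.card p.parts ≤ m := by
      intro p
      have := Multiset.card_nsmul_le_sum (s := p.parts) (a := 1) (fun x hx => p.parts_pos hx)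
      rw [p.parts_sum] at this
      simpa using this
    have : Nat.card {p : Nat.Partition m // |chg (beads p.parts m)| ≤ B} ≤
        ((Finset.Icc (-(B : ℤ)) B).biUnion (fun t => (QQ_finite m m t).toFinset)).card := by
      rw [← Fintype.card_coe, ← Nat.card_eq_fintype_card]
      refine Nat.card_le_card_of_injective (fun p => ⟨beads p.1.parts m, ?_⟩) ?_
      · rw [Finset.mem_biUnion]
        refine ⟨chg (beads p.1.parts m), Finset.mem_Icc.2 (abs_le.1 p.2), ?_⟩
        rw [Set.Finite.mem_toFinset]
        refine ⟨beads_card _ _, ?_, rfl⟩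
        have := beads_sum p.1.parts m (hcl p.1)
        rw [p.1.parts_sum] at this
        generalize (∑ x ∈ beads p.1.parts m, x) = u at *
        zify at this
        linarith
      · intro p p' h
        simp only [Subtype.mk.injEq] at h
        have := beads_inj _ _ m (fun x hx => p.1.parts_pos hx) (fun x hx => p'.1.parts_pos hx) (hcl _) (hcl _) h
        exact Subtype.ext (Nat.Partition.ext this)
    refine this.trans (Finset.card_biUnion_le.trans (le_of_eq ?_))
    apply Finset.sum_congr rfl
    intro t _
    exact (Set.ncard_eq_toFinset_card _ _).symm
  calc _ ≤ K * ∑ t ∈ Finset.Icc (-(B : ℤ)) B, (QQ m m t).ncard := Nat.mul_le_mul_left _ h1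
    _ = ∑ t ∈ Finset.Icc (-(B : ℤ)) B, K * (QQ m m t).ncard := Finset.mul_sum _ _ _
    _ ≤ ∑ t ∈ Finset.Icc (-(B : ℤ)) B, Fintype.card (Nat.Partition (m + 2 * σ)) := by
      apply Finset.sum_le_sum
      intro t ht
      rw [Finset.mem_Icc] at ht
      exact key_count m m K B σ t hm (abs_le.2 ht) hσ
    _ = _ := by
      rw [Finset.sum_const, Int.card_Icc, smul_eq_mul]
      congr 1
      omega

def pc (n : ℕ) : ℕ := Fintype.card (Nat.Partition n)

lemma many_ones (m s : ℕ) :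
    (Finset.univ.filter (fun p : Nat.Partition (m + s) => s ≤ p.parts.count 1)).card ≤ pc m := by
  classical
  have key : ∀ p : Nat.Partition (m + s), s ≤ p.parts.count 1 →
      ∃ p' : Nat.Partition m, p.parts = p'.parts + Multiset.replicate s 1 := by
    intro p hp
    have hle : Multiset.replicate s 1 ≤ p.parts := Multiset.le_count_iff_replicate_le.1 hp
    have hadd : p.parts - Multiset.replicate s 1 + Multiset.replicate s 1 = p.parts := Multiset.sub_add_cancel hle
    refine ⟨⟨p.parts - Multiset.replicate s 1, ?_, ?_⟩, hadd.symm⟩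
    · intro i hi
      exact p.parts_pos (Multiset.mem_of_le (Multiset.sub_le_self _ _) hi)
    · have := congrArg Multiset.sum hadd
      rw [Multiset.sum_add, p.parts_sum] at this
      simp at this
      exact this
  choose! g hg using key
  unfold pc
  rw [← Finset.card_univ]
  apply Finset.card_le_card_of_injOn g (fun _ _ => by simp)
  intro p hp p' hp' h
  simp at hp hp'
  apply Nat.Partition.ext
  rw [hg p hp, hg p' hp', h]

def E1 (n s D : ℕ) : Finset (Nat.Partition n) :=
  Finset.univ.filter (fun p => p.parts.count 1 < s ∧ D ≤ (p.parts.toFinset.erase 1).card)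

lemma E1_le (n s D : ℕ) : (E1 n s D).card * D ≤ pc n * s := by
  classical
  have h1 : (E1 n s D).card * D ≤ ((E1 n s D).sigma (fun p => p.parts.toFinset.erase 1)).card := by
    rw [Finset.card_sigma, ← smul_eq_mul]
    apply Finset.card_nsmul_le_sum
    intro p hp
    simp only [E1, Finset.mem_filter] at hp
    exact hp.2.2
  have key : ∀ p : Nat.Partition n, ∀ v : ℕ, v ∈ p.parts → ∃ p' : Nat.Partition n,
      p'.parts + {v} = p.parts + Multiset.replicate v 1 := by
    intro p v hv
    have hadd : p.parts.erase v + {v} = p.parts := by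
      rw [add_comm, Multiset.singleton_add, Multiset.cons_erase hv]
    refine ⟨⟨p.parts.erase v + Multiset.replicate v 1, ?_, ?_⟩, ?_⟩
    · intro i hi
      rw [Multiset.mem_add] at hi
      rcases hi with hi | hi
      · exact p.parts_pos (Multiset.mem_of_mem_erase hi)
      · rw [Multiset.eq_of_mem_replicate hi]; norm_num
    · have := congrArg Multiset.sum hadd
      rw [Multiset.sum_add, p.parts_sum] at this
      simp at this
      simp [this]
    · simp only
      rw [add_right_comm, hadd]
  choose! g hg using key
  have h2 : ((E1 n s D).sigma (fun p => p.parts.toFinset.erase 1)).card ≤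
      ((Finset.univ : Finset (Nat.Partition n)) ×ˢ Finset.range s).card := by
    apply Finset.card_le_card_of_injOn (fun a => (g a.1 a.2, a.1.parts.count 1))
    · rintro ⟨p, v⟩ h
      simp only [E1, Finset.coe_sigma, Set.mem_sigma_iff, Finset.mem_coe, Finset.mem_filter] at h
      simp [h.1.2.1]
    · rintro ⟨p, v⟩ h ⟨p', v'⟩ h' heq
      simp only [Finset.coe_sigma, Set.mem_sigma_iff, Finset.mem_coe, Finset.mem_erase, Multiset.mem_toFinset] at h h'
      simp only [Prod.mk.injEq] at heq
      obtain ⟨e1, e2⟩ := heq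
      have a1 := hg p v h.2.2
      have a2 := hg p' v' h'.2.2
      have c1 := congrArg (Multiset.count 1) a1
      have c2 := congrArg (Multiset.count 1) a2
      rw [Multiset.count_add, Multiset.count_add, Multiset.count_singleton, if_neg (Ne.symm h.2.1), Multiset.count_replicate_self] at c1
      rw [Multiset.count_add, Multiset.count_add, Multiset.count_singleton, if_neg (Ne.symm h'.2.1), Multiset.count_replicate_self] at c2
      rw [e1] at c1 a1
      have hv : v = v' := by omega
      subst hv
      have hp : p = p' := by
        apply Nat.Partition.ext
        rw [a1] at a2
        exact add_right_cancel a2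
      subst hp
      rfl
  rw [Finset.card_product, Finset.card_range, Finset.card_univ] at h2
  exact h1.trans h2

def SS (n : ℕ) : ℕ → Finset (Multiset ℕ)
  | 0 => {0}
  | D + 1 => (SS n D ×ˢ (Finset.range (n + 1) ×ˢ Finset.range (n + 1))).image
      (fun a => a.1 + Multiset.replicate a.2.2 a.2.1)

lemma SS_card (n D : ℕ) : (SS n D).card ≤ (n + 1) ^ (2 * D) := by
  induction D with
  | zero => simp [SS]
  | succ D ih =>
    rw [SS]
    refine Finset.card_image_le.trans ?_
    rw [Finset.card_product, Finset.card_product, Finset.card_range, show 2 * (D + 1) = 2 * D + 2 by ring, pow_add]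
    exact Nat.mul_le_mul ih (by rw [sq])

lemma mem_SS (n D : ℕ) : ∀ M : Multiset ℕ, (∀ x ∈ M, x ≤ n) → Multiset.card M ≤ n →
    M.toFinset.card ≤ D → M ∈ SS n D := by
  classical
  induction D with
  | zero =>
    intro M _ _ h
    simp at h
    simp [SS, h]
  | succ D ih =>
    intro M h1 h2 h3
    rw [SS, Finset.mem_image]
    rcases M.empty_or_exists_mem with rfl | ⟨v, hv⟩
    · exact ⟨(0, (0, 0)), by
        simp only [Finset.mem_product, Finset.mem_range]
        exact ⟨ih 0 (by simp) (by simp) (by simp), by omega, by omega⟩, by simp⟩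
    · refine ⟨(M.filter (fun x => x ≠ v), (v, M.count v)), ?_, ?_⟩
      · simp only [Finset.mem_product, Finset.mem_range]
        refine ⟨ih _ ?_ ?_ ?_, ?_, ?_⟩
        · intro x hx; exact h1 x (Multiset.mem_of_mem_filter hx)
        · exact (Multiset.card_le_card (Multiset.filter_le _ _)).trans h2
        · have : (M.filter (fun x => x ≠ v)).toFinset = M.toFinset.erase v := by
            ext x; simp [and_comm]
          rw [this, Finset.card_erase_of_mem (by simpa using hv)]
          omega
        · have := h1 v hv; omega
        · have := Multiset.count_le_card v M; omega
      · simp only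
        have := Multiset.filter_add_not (fun x => x = v) M
        rw [Multiset.filter_eq', add_comm] at this
        exact this

lemma part_card_le {n : ℕ} (p : Nat.Partition n) : Multiset.card p.parts ≤ n := by
  have := Multiset.card_nsmul_le_sum (s := p.parts) (a := 1) (fun x hx => p.parts_pos hx)
  rw [p.parts_sum] at this
  simpa using this

def E2 (n D : ℕ) : Finset (Nat.Partition n) :=
  Finset.univ.filter (fun p => (p.parts.toFinset.erase 1).card < D)

lemma E2_le (n D : ℕ) : (E2 n D).card ≤ (n + 1) ^ (2 * D) := by
  refine le_trans ?_ (SS_card n D)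
  apply Finset.card_le_card_of_injOn (fun p => p.parts)
  · intro p hp
    simp only [E2, Finset.coe_filter, Set.mem_ofPred_eq, Finset.mem_univ, true_and] at hp
    apply mem_SS
    · intro x hx
      have := Multiset.le_sum_of_mem hx
      rwa [p.parts_sum] at this
    · exact part_card_le p
    · have := Finset.pred_card_le_card_erase (s := p.parts.toFinset) (a := 1)
      simp only
      omega
  · intro p _ p' _ h
    exact Nat.Partition.ext h

lemma pc_lower (n r : ℕ) (h : (r + 1) * r ≤ n) : 2 ^ r ≤ pc n := by
  classical
  have hs : ∀ S ∈ (Finset.Icc 2 (r + 1)).powerset, ∑ x ∈ S, x ≤ n := by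
    intro S hS
    rw [Finset.mem_powerset] at hS
    calc ∑ x ∈ S, x ≤ ∑ x ∈ S, (r + 1) := Finset.sum_le_sum (fun x hx => (Finset.mem_Icc.1 (hS hx)).2)
      _ = S.card * (r + 1) := by simp
      _ ≤ r * (r + 1) := Nat.mul_le_mul_right _ (by simpa using Finset.card_le_card hS)
      _ ≤ n := by linarith
  have key : ∀ S ∈ (Finset.Icc 2 (r + 1)).powerset, ∃ p : Nat.Partition n,
      p.parts = S.val + Multiset.replicate (n - ∑ x ∈ S, x) 1 := by
    intro S hS
    refine ⟨⟨S.val + Multiset.replicate (n - ∑ x ∈ S, x) 1, ?_, ?_⟩, rfl⟩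
    · intro i hi
      rw [Multiset.mem_add] at hi
      rcases hi with hi | hi
      · have := (Finset.mem_Icc.1 (Finset.mem_powerset.1 hS (show i ∈ S from hi))).1
        omega
      · rw [Multiset.eq_of_mem_replicate hi]; norm_num
    · rw [Multiset.sum_add, Multiset.sum_replicate, smul_eq_mul, mul_one]
      have h2 : S.val.sum = ∑ x ∈ S, x := by rw [Finset.sum, Multiset.map_id']
      rw [h2]
      have := hs S hS
      omega
  choose! g hg using key
  have : (Finset.Icc 2 (r + 1)).powerset.card ≤ (Finset.univ : Finset (Nat.Partition n)).card := by
    apply Finset.card_le_card_of_injOn g (fun _ _ => by simp)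
    intro S hS T hT h
    have aux : ∀ S ∈ (Finset.Icc 2 (r + 1)).powerset, (g S).parts.filter (fun x => x ≠ 1) = S.val := by
      intro S hS
      rw [hg S hS, Multiset.filter_add, Multiset.filter_eq_self.2, Multiset.filter_eq_nil.2, add_zero]
      · intro a ha
        rw [Multiset.eq_of_mem_replicate ha]; simp
      · intro a ha
        have := (Finset.mem_Icc.1 (Finset.mem_powerset.1 hS (show a ∈ S from ha))).1
        omega
    have a1 := aux S hS
    have a2 := aux T hT
    rw [h] at a1
    exact Finset.val_injective (a1.symm.trans a2)
  rw [Finset.card_powerset, Nat.card_Icc] at this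
  simpa [pc] using this

lemma ratio (m s r : ℕ) (hs : 0 < s) (hr : (r + 1) * r ≤ m + s) (h : 4 * (m + s + 1) ^ (8 * s) ≤ 2 ^ r) :
    pc (m + s) ≤ 2 * pc m := by
  classical
  have h1 := many_ones m s
  have h2 := E1_le (m + s) s (4 * s)
  have h3 := E2_le (m + s) (4 * s)
  have h4 := pc_lower (m + s) r hr
  have h5 : pc (m + s) ≤ (Finset.univ.filter (fun p : Nat.Partition (m + s) => s ≤ p.parts.count 1)).card
      + ((E1 (m + s) s (4 * s)).card + (E2 (m + s) (4 * s)).card) := by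
    unfold pc
    rw [← Finset.card_univ]
    refine le_trans (Finset.card_le_card ?_) ((Finset.card_union_le _ _).trans (Nat.add_le_add_left (Finset.card_union_le _ _) _))
    intro p _
    simp only [E1, E2, Finset.mem_union, Finset.mem_filter, Finset.mem_univ, true_and]
    omega
  have h6 : 4 * (E1 (m + s) s (4 * s)).card ≤ pc (m + s) := by
    apply Nat.le_of_mul_le_mul_right _ hs
    linarith
  rw [show 2 * (4 * s) = 8 * s by ring] at h3
  omega

def PB (f : ℕ → ℕ) : Prop := ∃ A k : ℕ, ∀ l, f l ≤ A * (l + 1) ^ k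

lemma PB_const (c : ℕ) : PB (fun _ => c) := ⟨c, 0, fun l => by simp⟩
lemma PB_id : PB (fun l => l) := ⟨1, 1, fun l => by simp⟩
lemma PB_add {f g : ℕ → ℕ} (hf : PB f) (hg : PB g) : PB (fun l => f l + g l) := by
  obtain ⟨A, k, h⟩ := hf
  obtain ⟨B, j, h'⟩ := hg
  refine ⟨A + B, k + j, fun l => ?_⟩
  rw [add_mul]
  apply Nat.add_le_add
  · exact (h l).trans (Nat.mul_le_mul_left _ (Nat.pow_le_pow_right (by omega) (by omega)))
  · exact (h' l).trans (Nat.mul_le_mul_left _ (Nat.pow_le_pow_right (by omega) (by omega)))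
lemma PB_mul {f g : ℕ → ℕ} (hf : PB f) (hg : PB g) : PB (fun l => f l * g l) := by
  obtain ⟨A, k, h⟩ := hf
  obtain ⟨B, j, h'⟩ := hg
  refine ⟨A * B, k + j, fun l => ?_⟩
  calc _ ≤ (A * (l + 1) ^ k) * (B * (l + 1) ^ j) := Nat.mul_le_mul (h l) (h' l)
    _ = _ := by ring

lemma PB_ev {f : ℕ → ℕ} (hf : PB f) : ∃ l0, ∀ l ≥ l0, f l ≤ 2 ^ l := by
  obtain ⟨A, k, h⟩ := hf
  have h1 := tendsto_pow_const_div_const_pow_of_one_lt k (r := (2 : ℝ)) (by norm_num)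
  have h2 := (Filter.tendsto_add_atTop_iff_nat 1).2 h1
  have h3 := h2.eventually_lt_const (u := 1 / (2 * (A + 1) : ℝ)) (by positivity)
  obtain ⟨l0, hl⟩ := Filter.eventually_atTop.1 h3
  refine ⟨l0, fun l hl' => ?_⟩
  have h4 := hl l hl'
  rw [div_lt_div_iff₀ (by positivity) (by positivity)] at h4
  have h5 : (A : ℝ) * ((l : ℝ) + 1) ^ k ≤ 2 ^ l := by
    have : (0 : ℝ) ≤ ((l : ℝ) + 1) ^ k := by positivity
    rw [pow_succ] at h4
    push_cast at h4
    nlinarith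
  have h6 : A * (l + 1) ^ k ≤ 2 ^ l := by exact_mod_cast h5
  exact (h l).trans h6

lemma chg_bound (m V : ℕ) (p : Nat.Partition m) (h : p.parts.sum / 2 - nh 2 p.parts < V) :
    |chg (beads p.parts m)| ≤ ((4 * V + 1 : ℕ) : ℤ) := by
  have h1 := nh_two p.parts m (part_card_le p)
  have h2 := nh_le 2 (by norm_num) p.parts
  rw [p.parts_sum] at h h1 h2
  set t := chg (beads p.parts m)
  have h3 : t * (t - 1) ≤ 4 * V := by
    have : 2 * m ≤ 4 * nh 2 p.parts + 4 * V := by omega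
    zify at this
    linarith
  rw [abs_le]
  push_cast
  constructor
  · by_contra hc
    push Not at hc
    nlinarith
  · by_contra hc
    push Not at hc
    nlinarith

lemma pc_pos (n : ℕ) : 0 < pc n := Fintype.card_pos

set_option maxHeartbeats 2000000 in
lemma key_asym (C : ℕ) (ε : ℝ) (hε : 0 < ε) : ∃ M : ℕ, ∀ m ≥ M, ∀ V : ℕ, V ≤ Nat.log 2 m + C →
    (Nat.card {p : Nat.Partition m // p.parts.sum / 2 - nh 2 p.parts < V} : ℝ) < ε * pc m := by
  obtain ⟨R, hR⟩ := exists_nat_gt (2 / ε)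
  have hR0 : (0 : ℝ) < R := lt_trans (by positivity) hR
  let B : ℕ → ℕ := fun l => 4 * (l + C) + 1
  let K : ℕ → ℕ := fun l => R * (2 * B l + 1)
  let σ : ℕ → ℕ := fun l => 2 * K l * B l + 4 * K l * K l
  let r : ℕ → ℕ := fun l => 2 + 8 * (2 * σ l) * (l + 2)
  have pB : PB B := PB_add (PB_mul (PB_const 4) (PB_add PB_id (PB_const C))) (PB_const 1)
  have pK : PB K := PB_mul (PB_const R) (PB_add (PB_mul (PB_const 2) pB) (PB_const 1))
  have pσ : PB σ := PB_add (PB_mul (PB_mul (PB_const 2) pK) pB) (PB_mul (PB_mul (PB_const 4) pK) pK)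
  have pr : PB r := PB_add (PB_const 2) (PB_mul (PB_mul (PB_const 8) (PB_mul (PB_const 2) pσ)) (PB_add PB_id (PB_const 2)))
  obtain ⟨l0, hl0⟩ := PB_ev (PB_mul (PB_add pr (PB_const 1)) pr)
  refine ⟨2 ^ l0, fun m hm V hV => ?_⟩
  have hm0 : 0 < m := lt_of_lt_of_le (by positivity) hm
  set l := Nat.log 2 m with hl
  have hll : l0 ≤ l := Nat.le_log_of_pow_le (by norm_num) hm
  have hc := hl0 l hll
  have hml : 2 ^ l ≤ m := Nat.pow_log_le_self 2 (by omega)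
  have hmu : m < 2 ^ (l + 1) := Nat.lt_pow_succ_log_self (by norm_num) m
  have hRn : 0 < R := by exact_mod_cast hR0
  have hK0 : 0 < K l := Nat.mul_pos hRn (by omega)
  have hσ0 : 0 < σ l := by
    have : 0 < 4 * K l * K l := by positivity
    simp only [σ]
    omega
  have hsr : 2 * σ l + 1 ≤ 2 ^ l := by
    have : 2 * σ l + 1 ≤ r l := by
      simp only [r]
      nlinarith
    nlinarith
  have hrat : pc (m + 2 * σ l) ≤ 2 * pc m := by
    apply ratio m (2 * σ l) (r l) (by omega) (by omega)
    have e1 : m + 2 * σ l + 1 ≤ 2 ^ (l + 2) := by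
      rw [pow_succ] at hmu ⊢
      rw [pow_succ]
      omega
    calc 4 * (m + 2 * σ l + 1) ^ (8 * (2 * σ l)) ≤ 4 * (2 ^ (l + 2)) ^ (8 * (2 * σ l)) :=
          Nat.mul_le_mul_left _ (Nat.pow_le_pow_left e1 _)
      _ = 2 ^ (r l) := by
        rw [← pow_mul, show (4 : ℕ) = 2 ^ 2 by norm_num, ← pow_add]
        congr 1
        simp only [r]
        ring
  have hbad := bad_count m (K l) (B l) (σ l) hm0 le_rfl
  set bad := Nat.card {p : Nat.Partition m // |chg (beads p.parts m)| ≤ B l} with hbd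
  have hB : 4 * V + 1 ≤ B l := by
    simp only [B]
    omega
  have hB' : ((4 * V + 1 : ℕ) : ℤ) ≤ (B l : ℤ) := Int.ofNat_le.2 hB
  have himp : ∀ p : Nat.Partition m, p.parts.sum / 2 - nh 2 p.parts < V →
      |chg (beads p.parts m)| ≤ B l := by
    intro p hp
    exact (chg_bound m V p hp).trans hB'
  have hle : Nat.card {p : Nat.Partition m // p.parts.sum / 2 - nh 2 p.parts < V} ≤ bad :=
    Nat.card_le_card_of_injective (fun p => ⟨p.1, himp p.1 p.2⟩)
      (fun a b h => Subtype.ext (Subtype.mk.inj h))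
  have h2 : R * bad ≤ 2 * pc m := by
    have : (2 * B l + 1) * (R * bad) ≤ (2 * B l + 1) * (2 * pc m) := by
      calc _ = K l * bad := by simp only [K]; ring
        _ ≤ _ := hbad
        _ ≤ _ := Nat.mul_le_mul_left _ hrat
    exact Nat.le_of_mul_le_mul_left this (by omega)
  have h3 : (R : ℝ) * bad ≤ 2 * pc m := by exact_mod_cast h2
  have h4 : (Nat.card {p : Nat.Partition m // p.parts.sum / 2 - nh 2 p.parts < V} : ℝ) ≤ bad := by exact_mod_cast hle
  have h5 : (0 : ℝ) < pc m := by exact_mod_cast pc_pos m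
  rw [div_lt_iff₀ hε] at hR
  by_contra hcon
  push Not at hcon
  nlinarith

lemma desc_val (n k : ℕ) :
    padicValNat 2 (Nat.descFactorial n k) ≤ Nat.log 2 n + padicValNat 2 k.factorial := by
  by_cases h : n < k
  · rw [Nat.descFactorial_eq_zero_iff_lt.2 h]; simp
  · rw [Nat.descFactorial_eq_factorial_mul_choose]
    have hc : Nat.choose n k ≠ 0 := (Nat.choose_pos (by omega)).ne'
    rw [padicValNat.mul (Nat.factorial_ne_zero k) hc]
    have := Nat.factorization_choose_le_log (p := 2) (n := n) (k := k)
    rw [Nat.factorization_def _ Nat.prime_two] at this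
    omega

/-- The set of functions in a fibre. -/
def Fib (F : Type*) [Field F] (n : ℕ) (Fn : Polynomial F →₀ ℕ)
    (μ : Polynomial F →₀ Multiset ℕ) : Prop :=
  IsXn F n μ ∧ (∀ f : Polynomial F, (μ f).sum = Fn f)

lemma ms_zero {s : Multiset ℕ} (h : ∀ m ∈ s, 0 < m) (h0 : s.sum = 0) : s = 0 := by
  by_contra hs
  obtain ⟨a, ha⟩ := Multiset.exists_mem_of_ne_zero hs
  have := Multiset.sum_eq_zero_iff.1 h0 a ha
  have := h a ha
  omega

lemma fib_support {F : Type*} [Field F] {n : ℕ} {Fn : Polynomial F →₀ ℕ}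
    {μ : Polynomial F →₀ Multiset ℕ} (hp : ∀ f : Polynomial F, ∀ m ∈ μ f, 0 < m)
    (hs : ∀ f : Polynomial F, (μ f).sum = Fn f) : μ.support = Fn.support := by
  ext f
  rw [Finsupp.mem_support_iff, Finsupp.mem_support_iff, not_iff_not, ← hs f]
  constructor
  · intro h; rw [h]; rfl
  · intro h; exact ms_zero (hp f) h

lemma fib_iff {F : Type*} [Field F] {n : ℕ} {Fn : Polynomial F →₀ ℕ}
    (hF : ∀ f ∈ Fn.support, f.Monic ∧ Irreducible f ∧ f ≠ Polynomial.X)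
    (hn : (Fn.sum fun f m => f.natDegree * m) = n) (μ : Polynomial F →₀ Multiset ℕ) :
    Fib F n Fn μ ↔ (∀ f : Polynomial F, ∀ m ∈ μ f, 0 < m) ∧
      (∀ f : Polynomial F, (μ f).sum = Fn f) := by
  constructor
  · rintro ⟨⟨_, h2, _⟩, h4⟩
    exact ⟨h2, h4⟩
  · rintro ⟨h2, h4⟩
    have hs := fib_support (n := n) h2 h4
    refine ⟨⟨by rw [hs]; exact hF, h2, ?_⟩, h4⟩
    rw [← hn, Finsupp.sum, Finsupp.sum, hs]
    exact Finset.sum_congr rfl fun f _ => by rw [h4 f, mul_comm]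

/-- Reassemble. -/
noncomputable def fibEquiv {F : Type*} [Field F] (Fn : Polynomial F →₀ ℕ) (f0 : Polynomial F)
    (s0 : Multiset ℕ) (hs0 : s0.sum = Fn f0) (hs0' : ∀ m ∈ s0, 0 < m) :
    {μ : Polynomial F →₀ Multiset ℕ // (∀ f : Polynomial F, ∀ m ∈ μ f, 0 < m) ∧
      (∀ f : Polynomial F, (μ f).sum = Fn f)} ≃
    Nat.Partition (Fn f0) × {μ : Polynomial F →₀ Multiset ℕ //
      ((∀ f : Polynomial F, ∀ m ∈ μ f, 0 < m) ∧
      (∀ f : Polynomial F, (μ f).sum = Fn f)) ∧ μ f0 = s0} where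
  toFun μ := (⟨μ.1 f0, fun {i} hi => μ.2.1 f0 i hi, μ.2.2 f0⟩,
    ⟨μ.1.update f0 s0, by
      classical
      refine ⟨⟨fun f => ?_, fun f => ?_⟩, by simp⟩
      · rw [Finsupp.coe_update]
        by_cases h : f = f0
        · subst h; simpa using hs0'
        · rw [Function.update_of_ne h]; exact μ.2.1 f
      · rw [Finsupp.coe_update]
        by_cases h : f = f0
        · subst h; simpa using hs0
        · rw [Function.update_of_ne h]; exact μ.2.2 f⟩)
  invFun x := ⟨x.2.1.update f0 x.1.parts, by
      classical
      refine ⟨fun f => ?_, fun f => ?_⟩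
      · rw [Finsupp.coe_update]
        by_cases h : f = f0
        · subst h
          rw [Function.update_self]
          intro m hm
          exact x.1.parts_pos hm
        · rw [Function.update_of_ne h]; exact x.2.2.1.1 f
      · rw [Finsupp.coe_update]
        by_cases h : f = f0
        · subst h; rw [Function.update_self]; exact x.1.parts_sum
        · rw [Function.update_of_ne h]; exact x.2.2.1.2 f⟩
  left_inv μ := by
    classical
    apply Subtype.ext
    ext1 f
    simp only [Finsupp.coe_update, Function.update_idem, Function.update_eq_self]
  right_inv x := by
    classical
    apply Prod.ext
    · apply Nat.Partition.ext
      simp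
    · apply Subtype.ext
      ext1 f
      simp only [Finsupp.coe_update, Function.update_idem]
      have := x.2.2.2
      by_cases h : f = f0
      · subst h; simp [this]
      · rw [Function.update_of_ne h]

lemma fibEquiv_parts {F : Type*} [Field F] (Fn : Polynomial F →₀ ℕ) (f0 : Polynomial F)
    (s0 : Multiset ℕ) (hs0 : s0.sum = Fn f0) (hs0' : ∀ m ∈ s0, 0 < m) (x) :
    (fibEquiv Fn f0 s0 hs0 hs0' x).1.parts = x.1 f0 := rfl

lemma fib_ratio {F : Type*} [Field F] (Fn : Polynomial F →₀ ℕ) (f0 : Polynomial F)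
    (P : Multiset ℕ → Prop) (Q R : (Polynomial F →₀ Multiset ℕ) → Prop)
    (hQ : ∀ μ, Q μ ↔ (∀ f : Polynomial F, ∀ m ∈ μ f, 0 < m) ∧
      (∀ f : Polynomial F, (μ f).sum = Fn f))
    (hR : ∀ μ, R μ → Q μ ∧ P (μ f0)) (ε : ℝ) (hε : 0 < ε)
    (hb : (Nat.card {p : Nat.Partition (Fn f0) // P p.parts} : ℝ) < ε * pc (Fn f0)) :
    (Nat.card {μ // R μ} : ℝ) / (Nat.card {μ // Q μ} : ℝ) < ε := by
  classical
  obtain ⟨p0⟩ : Nonempty (Nat.Partition (Fn f0)) := ⟨default⟩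
  let e := fibEquiv Fn f0 p0.parts p0.parts_sum (fun m hm => p0.parts_pos hm)
  have he : ∀ x, (e x).1.parts = x.1 f0 :=
    fun x => fibEquiv_parts Fn f0 p0.parts p0.parts_sum (fun m hm => p0.parts_pos hm) x
  clear_value e
  have e' := (Equiv.subtypeEquivRight hQ).trans e
  have hc := Nat.card_congr e'
  rw [Nat.card_prod, Nat.card_eq_fintype_card (α := Nat.Partition (Fn f0))] at hc
  let G := {μ : Polynomial F →₀ Multiset ℕ //
      ((∀ f : Polynomial F, ∀ m ∈ μ f, 0 < m) ∧
      (∀ f : Polynomial F, (μ f).sum = Fn f)) ∧ μ f0 = p0.parts}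
  change _ = _ * Nat.card G at hc
  rw [hc]
  by_cases hz : Nat.card G = 0
  · rw [hz]; simpa using hε
  have hfin : Finite G := Nat.finite_of_card_ne_zero hz
  have hpos : 0 < Nat.card G := Nat.pos_of_ne_zero hz
  let φ : {μ // R μ} → {p : Nat.Partition (Fn f0) // P p.parts} × G := fun μ =>
    (⟨(e ⟨μ.1, (hQ _).1 (hR _ μ.2).1⟩).1, by
      rw [he]; exact (hR _ μ.2).2⟩, (e ⟨μ.1, (hQ _).1 (hR _ μ.2).1⟩).2)
  have hφ : Function.Injective φ := by
    intro a b hab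
    have h1 := congrArg (fun x => (x.1.1, x.2)) hab
    have h2 : e ⟨a.1, (hQ _).1 (hR _ a.2).1⟩ = e ⟨b.1, (hQ _).1 (hR _ b.2).1⟩ := h1
    have h3 := e.injective h2
    exact Subtype.ext (Subtype.mk.inj h3)
  have hle := Nat.card_le_card_of_injective φ hφ
  rw [Nat.card_prod] at hle
  have hle' : (Nat.card {μ // R μ} : ℝ) ≤
      (Nat.card {p : Nat.Partition (Fn f0) // P p.parts} : ℝ) * Nat.card G := by
    exact_mod_cast hle
  have hpc : 0 < pc (Fn f0) := pc_pos _
  have hpc' : (0 : ℝ) < pc (Fn f0) := by exact_mod_cast hpc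
  have hG' : (0 : ℝ) < Nat.card G := by exact_mod_cast hpos
  change _ / (((pc (Fn f0) * Nat.card G : ℕ)) : ℝ) < ε
  rw [Nat.cast_mul, div_lt_iff₀ (by positivity)]
  nlinarith

/-- A linear polynomial of large weight. -/
lemma exists_linear {F : Type*} [Field F] [Fintype F] (n V : ℕ) (Fn : Polynomial F →₀ ℕ)
    (hF : ∀ f ∈ Fn.support, f.Monic ∧ Irreducible f ∧ f ≠ Polynomial.X)
    (hn : (Fn.sum fun f m => f.natDegree * m) = n)
    (hD : ∑ f ∈ Fn.support, (f.natDegree - 1) * Fn f < V) (hV : 4 * V ≤ n) :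
    ∃ f0, n ≤ 2 * Fintype.card F * Fn f0 := by
  classical
  by_contra! hcon
  have hn0 : 0 < n := by omega
  have hlin : ∀ f ∈ Fn.support, f.natDegree * Fn f ≤
      2 * ((f.natDegree - 1) * Fn f) + (if f.natDegree = 1 then Fn f else 0) := by
    intro f hf
    have := (hF f hf).2.1.natDegree_pos
    split_ifs with h
    · simp [h]
    · have : f.natDegree ≤ 2 * (f.natDegree - 1) := by omega
      nlinarith
  have h1 := Finset.sum_le_sum hlin
  rw [Finset.sum_add_distrib, ← Finset.mul_sum, ← Finset.sum_filter] at h1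
  set S := Fn.support.filter (fun f => f.natDegree = 1)
  have hS : S.card ≤ Fintype.card F := by
    rw [← Finset.card_univ]
    apply Finset.card_le_card_of_injOn (fun f => f.coeff 0) (by simp)
    intro f hf g hg hfg
    simp only [S, Finset.coe_filter, Set.mem_ofPred_eq] at hf hg
    have h1 := (hF f hf.1).1.eq_X_add_C hf.2
    have h2 := (hF g hg.1).1.eq_X_add_C hg.2
    rw [h1, h2]
    simp only at hfg
    rw [hfg]
  have h2 : ∑ f ∈ S, 2 * Fintype.card F * Fn f ≤ S.card * (n - 1) := by
    refine (Finset.sum_le_card_nsmul S _ (n - 1) fun f _ => ?_).trans (le_of_eq (smul_eq_mul _ _))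
    have := hcon f
    omega
  rw [← Finset.mul_sum] at h2
  have hn' : n = ∑ f ∈ Fn.support, f.natDegree * Fn f := hn.symm
  rw [← hn'] at h1
  have hqpos : 0 < Fintype.card F := Fintype.card_pos
  have h3 : n ≤ 2 * ∑ f ∈ S, Fn f := by omega
  have h4 : Fintype.card F * n ≤ S.card * (n - 1) := by nlinarith
  have h5 : S.card * (n - 1) ≤ Fintype.card F * (n - 1) := Nat.mul_le_mul_right _ hS
  have h6 : Fintype.card F * (n - 1) < Fintype.card F * n := Nat.mul_lt_mul_of_pos_left (by omega) hqpos
  omega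

theorem two_adic_fibrewise_proportion
    (q : ℕ) (hq : IsPrimePow q) (hodd : Odd q)
    (F : Type*) [Field F] [Fintype F] (hFq : Fintype.card F = q)
    (k : ℕ) (hk : 0 < k) :
    ∀ ε : ℝ, 0 < ε → ∃ N : ℕ, ∀ n ≥ N,
      ∀ Fn : Polynomial F →₀ ℕ,
        (∀ f ∈ Fn.support, f.Monic ∧ Irreducible f ∧ f ≠ Polynomial.X) →
        (Fn.sum fun f m => f.natDegree * m) = n →
        (Nat.card {μ : Polynomial F →₀ Multiset ℕ //
              IsXn F n μ ∧ (∀ f : Polynomial F, (μ f).sum = Fn f) ∧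
                padicValRat 2 (dMu q n μ) < (padicValNat 2 (Nat.descFactorial n k) : ℤ)} : ℝ) /
            (Nat.card {μ : Polynomial F →₀ Multiset ℕ //
              IsXn F n μ ∧ (∀ f : Polynomial F, (μ f).sum = Fn f)} : ℝ) < ε := by
  intro ε hε
  have h1q : 1 < q := hq.one_lt
  let Ck := padicValNat 2 k.factorial
  let C := Ck + Nat.log 2 (2 * q) + 1
  obtain ⟨M, hM⟩ := key_asym C ε hε
  obtain ⟨N1, hN1⟩ : ∃ N1, ∀ n ≥ N1, 4 * (Nat.log 2 n + Ck) ≤ n := by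
    obtain ⟨l0, hl0⟩ := PB_ev (PB_mul (PB_const 4) (PB_add PB_id (PB_const Ck)))
    refine ⟨2 ^ l0, fun n hn => ?_⟩
    have hn0 : 0 < n := lt_of_lt_of_le (by positivity) hn
    exact (hl0 (Nat.log 2 n) (Nat.le_log_of_pow_le (by norm_num) hn)).trans
      (Nat.pow_log_le_self 2 (by omega))
  refine ⟨max N1 (2 * q * M + 1), fun n hn Fn hF hsum => ?_⟩
  have hnN1 : N1 ≤ n := le_trans (le_max_left _ _) hn
  have hnM : 2 * q * M + 1 ≤ n := le_trans (le_max_right _ _) hn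
  set V := padicValNat 2 (Nat.descFactorial n k) with hVdef
  have hV : V ≤ Nat.log 2 n + Ck := desc_val n k
  have hV4 : 4 * V ≤ n := le_trans (by omega) (hN1 n hnN1)
  have hbad : ∀ μ : Polynomial F →₀ Multiset ℕ,
      (IsXn F n μ ∧ (∀ f : Polynomial F, (μ f).sum = Fn f) ∧
        padicValRat 2 (dMu q n μ) < (V : ℤ)) →
      ∑ f ∈ Fn.support, ((f.natDegree - 1) * Fn f + ((μ f).sum / 2 - nh 2 (μ f))) < V := by
    rintro μ ⟨h1, h2, h3⟩
    have h4 := lt_of_le_of_lt (dMu_val q hodd h1q n μ h1) h3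
    rw [fib_support (n := n) h1.2.1 h2] at h4
    have h5 := Nat.cast_lt.1 h4
    refine lt_of_le_of_lt (le_of_eq ?_) h5
    exact Finset.sum_congr rfl fun f _ => by rw [h2 f]
  by_cases hD : ∑ f ∈ Fn.support, (f.natDegree - 1) * Fn f < V
  · obtain ⟨f0, hf0⟩ := exists_linear n V Fn hF hsum hD hV4
    rw [hFq] at hf0
    have hM0 : M ≤ Fn f0 := by
      by_contra hlt
      have : 2 * q * Fn f0 ≤ 2 * q * M := Nat.mul_le_mul_left _ (by omega)
      omega
    have hf0pos : Fn f0 ≠ 0 := by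
      intro h
      rw [h] at hf0
      omega
    have hlog : Nat.log 2 n ≤ Nat.log 2 (Fn f0) + Nat.log 2 (2 * q) + 1 := by
      have a1 := Nat.lt_pow_succ_log_self (b := 2) (by norm_num) (Fn f0)
      have a2 := Nat.lt_pow_succ_log_self (b := 2) (by norm_num) (2 * q)
      have a3 : n < 2 ^ (Nat.log 2 (Fn f0) + Nat.log 2 (2 * q) + 2) := by
        have : 2 * q * Fn f0 < 2 ^ (Nat.log 2 (2 * q)).succ * 2 ^ (Nat.log 2 (Fn f0)).succ :=
          Nat.mul_lt_mul'' a2 a1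
        rw [← pow_add] at this
        refine lt_of_le_of_lt hf0 (lt_of_lt_of_le this ?_)
        exact Nat.pow_le_pow_right (by norm_num) (by omega)
      have := Nat.log_lt_of_lt_pow (by omega) a3
      omega
    have hb := hM (Fn f0) hM0 V (by simp only [C]; omega)
    refine fib_ratio Fn f0 (fun s => s.sum / 2 - nh 2 s < V) _ _
      (fun μ => fib_iff hF hsum μ) (fun μ hμ => ⟨⟨hμ.1, hμ.2.1⟩, ?_⟩) ε hε hb
    refine lt_of_le_of_lt ?_ (hbad μ hμ)
    have := Finset.single_le_sum (f := fun f => (f.natDegree - 1) * Fn f +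
      ((μ f).sum / 2 - nh 2 (μ f))) (fun _ _ => Nat.zero_le _)
      (Finsupp.mem_support_iff.2 hf0pos)
    exact le_trans (Nat.le_add_left _ _) this
  · have : IsEmpty {μ : Polynomial F →₀ Multiset ℕ //
              IsXn F n μ ∧ (∀ f : Polynomial F, (μ f).sum = Fn f) ∧
                padicValRat 2 (dMu q n μ) < (V : ℤ)} := by
      refine ⟨fun μ => hD (lt_of_le_of_lt ?_ (hbad μ.1 μ.2))⟩
      exact Finset.sum_le_sum fun f _ => Nat.le_add_right _ _
    rw [Nat.card_of_isEmpty]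
    simpa using hε
end
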